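/- arXiv:1907.00964 — 3 statements merged into one kernel-verified Lean document; each statement's English description precedes it below -/
import Mathlib

section
/- Let t ≥ 3 be an integer. For any ε > 0 there exist constants C₁ = C₁(t, ε) > 0 and C₂ = C₂(t, ε) > 0 such that the following holds. Let T be a tournament containing no copy of the unavoidable t-tournament 𝒰_t, and let σ be an ordering of V(T) that minimises the number of backward edges. Then for any interval I in σ consisting of n ≥ C₁ consecutive vertices, at most C₂ vertices of I are incident with more than εn backward edges of σ having both endpoints in I. -/
/-- `T` is a tournament: an orientation of the complete graph. -/
def IsTournament {V : Type*} (T : V → V → Prop) : Prop :=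
  (∀ x, ¬ T x x) ∧ ∀ x y, x ≠ y → (T x y ↔ ¬ T y x)

/-- The unavoidable `t`-tournament `𝒰_t` on `Fin 3 × Fin t`: three transitive classes
of order `t`, with all edges from class `i` to class `i + 1` (mod 3). -/
def UPat (t : ℕ) (p q : Fin 3 × Fin t) : Prop :=
  (p.1 = q.1 ∧ p.2 < q.2) ∨ q.1 = p.1 + 1

/-- `T` contains a copy of the unavoidable `t`-tournament `𝒰_t`. -/
def ContainsU {V : Type*} (T : V → V → Prop) (t : ℕ) : Prop :=
  ∃ f : Fin 3 × Fin t → V, Function.Injective f ∧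
    ∀ p q : Fin 3 × Fin t, UPat t p q → T (f p) (f q)

/-- The number of backward edges of the ordering `σ` of the vertices of `T`
(position `k` is occupied by the vertex `σ k`). -/
noncomputable def backCount {n : ℕ} {V : Type*} (T : V → V → Prop) (σ : Fin n ≃ V) : ℕ :=
  {p : Fin n × Fin n | p.1 < p.2 ∧ T (σ p.2) (σ p.1)}.ncard

/-- A function bounded by `K` whose average is at least `c * K` takes values at least `c / 2 * K`
on a proportion at least `c / 2` of its domain. -/
lemma card_filter_ge_of_sum_ge {α : Type*} (X : Finset α) (f : α → ℕ) (K : ℕ) (c : ℝ) (hc : 0 < c)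
    (hf : ∀ x ∈ X, f x ≤ K) (hK : 0 < K)
    (hs : c * X.card * K ≤ ∑ x ∈ X, (f x : ℝ)) :
    c / 2 * X.card ≤ (X.filter (fun x => c / 2 * K ≤ (f x : ℝ))).card := by
  classical
  have hK' : (0 : ℝ) < K := by exact_mod_cast hK
  have h1 : ∑ x ∈ X, (f x : ℝ) ≤
      ∑ x ∈ X, ((if c / 2 * K ≤ (f x : ℝ) then (K : ℝ) else 0) + c / 2 * K) := by
    refine Finset.sum_le_sum fun x hx => ?_
    have : (f x : ℝ) ≤ K := by exact_mod_cast hf x hx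
    have : 0 < c / 2 * K := by positivity
    split_ifs <;> linarith
  rw [Finset.sum_add_distrib, ← Finset.sum_filter, Finset.sum_const, Finset.sum_const,
    nsmul_eq_mul, nsmul_eq_mul] at h1
  refine le_of_mul_le_mul_right ?_ hK'
  nlinarith

open Classical in
/-- In a dense bipartite relation with one large side, some `s` elements of that side have a
positive proportion of common neighbours. -/
lemma exists_card_common_ge (s : ℕ) (c : ℝ) (hc : 0 < c) :
    ∃ (M : ℕ) (c' : ℝ), 0 < c' ∧ ∀ {α β : Type} (X : Finset α) (P : Finset β) (E : α → β → Prop),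
      M ≤ X.card → 0 < P.card →
      c * X.card * P.card ≤ ∑ x ∈ X, ((P.filter (E x)).card : ℝ) →
      ∃ S ⊆ X, S.card = s ∧ c' * P.card ≤ ((P.filter (fun p => ∀ x ∈ S, E x p)).card : ℝ) := by
  obtain ⟨M₀, hM₀⟩ := exists_nat_ge (4 * ((s : ℝ) + 1) / c)
  obtain ⟨M, hM⟩ := exists_nat_ge (2 * (M₀ : ℝ) / c)
  refine ⟨M, c / 4 / 2 ^ M₀, by positivity, ?_⟩
  intro α β X P E hX hP hE
  rw [div_le_iff₀ hc] at hM₀ hM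
  have hM₀pos : 0 < M₀ := by
    by_contra h
    have : M₀ = 0 := by omega
    subst this
    have : (0 : ℝ) ≤ s := by positivity
    norm_num at hM₀
    linarith
  have h1 := card_filter_ge_of_sum_ge X (fun x => (P.filter (E x)).card) P.card c hc
    (fun x _ => Finset.card_filter_le _ _) hP hE
  have h2 : M₀ ≤ (X.filter (fun x => c / 2 * P.card ≤ ((P.filter (E x)).card : ℝ))).card := by
    have : (M : ℝ) ≤ X.card := by exact_mod_cast hX
    have : (M₀ : ℝ) ≤
        ((X.filter (fun x => c / 2 * P.card ≤ ((P.filter (E x)).card : ℝ))).card : ℝ) := by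
      nlinarith
    exact_mod_cast this
  obtain ⟨X', hX', hX'c⟩ := Finset.exists_subset_card_eq h2
  have h3 : c / 2 * P.card * M₀ ≤ ∑ p ∈ P, ((X'.filter (fun x => E x p)).card : ℝ) := by
    have e : ∑ p ∈ P, (X'.filter (fun x => E x p)).card = ∑ x ∈ X', (P.filter (E x)).card :=
      (Finset.sum_card_bipartiteAbove_eq_sum_card_bipartiteBelow E).symm
    have e' : ∑ p ∈ P, ((X'.filter (fun x => E x p)).card : ℝ) =
        ∑ x ∈ X', ((P.filter (E x)).card : ℝ) := by exact_mod_cast e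
    rw [e']
    have := Finset.card_nsmul_le_sum X' (fun x => ((P.filter (E x)).card : ℝ)) (c / 2 * P.card)
      (fun x hx => (Finset.mem_filter.1 (hX' hx)).2)
    rw [hX'c, nsmul_eq_mul] at this
    linarith
  have h4 := card_filter_ge_of_sum_ge P (fun p => (X'.filter (fun x => E x p)).card) M₀ (c / 2)
    (by positivity) (fun p _ => hX'c ▸ Finset.card_filter_le _ _) hM₀pos h3
  set P' := P.filter (fun p => c / 2 / 2 * M₀ ≤ ((X'.filter (fun x => E x p)).card : ℝ)) with hP'
  have h5 : ∃ Q ∈ X'.powerset, (P'.card : ℝ) / 2 ^ M₀ ≤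
      ((P'.filter (fun p => X'.filter (fun x => E x p) = Q)).card : ℝ) := by
    have := Finset.exists_le_card_fiber_of_nsmul_le_card_of_maps_to (M := ℝ) (s := P')
      (t := X'.powerset) (f := fun p => X'.filter (fun x => E x p)) (b := (P'.card : ℝ) / 2 ^ M₀)
      (fun p _ => Finset.mem_powerset.2 (Finset.filter_subset _ _))
      ⟨∅, Finset.empty_mem_powerset _⟩
      (by rw [Finset.card_powerset, hX'c, nsmul_eq_mul]; push_cast; field_simp; rfl)
    simpa using this
  obtain ⟨Q, hQ, hQc⟩ := h5
  have hPpos : (0 : ℝ) < P.card := by exact_mod_cast hP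
  have hP'pos : (0 : ℝ) < P'.card := lt_of_lt_of_le (by positivity) h4
  have h6 : (0 : ℝ) < ((P'.filter (fun p => X'.filter (fun x => E x p) = Q)).card : ℝ) :=
    lt_of_lt_of_le (by positivity) hQc
  have h7 : 0 < (P'.filter (fun p => X'.filter (fun x => E x p) = Q)).card := by exact_mod_cast h6
  obtain ⟨p₀, hp₀⟩ := Finset.card_pos.1 h7
  have hQs : s ≤ Q.card := by
    rw [Finset.mem_filter, hP', Finset.mem_filter] at hp₀
    obtain ⟨⟨_, h⟩, rfl⟩ := hp₀
    have : (s : ℝ) ≤ ((X'.filter (fun x => E x p₀)).card : ℝ) := by linarith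
    exact_mod_cast this
  obtain ⟨S, hSQ, hSc⟩ := Finset.exists_subset_card_eq hQs
  refine ⟨S, fun x hx => (Finset.mem_filter.1 (hX' (Finset.mem_powerset.1 hQ (hSQ hx)))).1, hSc, ?_⟩
  have h8 : P'.filter (fun p => X'.filter (fun x => E x p) = Q) ⊆
      P.filter (fun p => ∀ x ∈ S, E x p) := by
    intro p hp
    rw [Finset.mem_filter, hP', Finset.mem_filter] at hp
    obtain ⟨⟨hpP, _⟩, rfl⟩ := hp
    exact Finset.mem_filter.2 ⟨hpP, fun x hx => (Finset.mem_filter.1 (hSQ hx)).2⟩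
  have h9 : ((P'.filter (fun p => X'.filter (fun x => E x p) = Q)).card : ℝ) ≤
      ((P.filter (fun p => ∀ x ∈ S, E x p)).card : ℝ) := by
    exact_mod_cast Finset.card_le_card h8
  calc c / 4 / 2 ^ M₀ * P.card = (c / 2 / 2 * P.card) / 2 ^ M₀ := by ring
    _ ≤ (P'.card : ℝ) / 2 ^ M₀ := by gcongr
    _ ≤ _ := hQc.trans h9

open Classical in
/-- A dense tripartite ternary relation on large parts contains a complete box of side `s`. -/
lemma exists_box_of_dense (s : ℕ) (c : ℝ) (hc : 0 < c) :
    ∃ M : ℕ, ∀ {α : Type} (X Y Z : Finset α) (E : α → α → α → Prop),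
      M ≤ X.card → M ≤ Y.card → M ≤ Z.card →
      c * X.card * (Y.card * Z.card) ≤
        ∑ x ∈ X, (((Y ×ˢ Z).filter (fun p => E x p.1 p.2)).card : ℝ) →
      ∃ S₁ ⊆ X, ∃ S₂ ⊆ Y, ∃ S₃ ⊆ Z, S₁.card = s ∧ S₂.card = s ∧ S₃.card = s ∧
        ∀ x ∈ S₁, ∀ y ∈ S₂, ∀ z ∈ S₃, E x y z := by
  obtain ⟨M₁, c₁, hc₁, H₁⟩ := exists_card_common_ge s c hc
  obtain ⟨M₂, c₂, hc₂, H₂⟩ := exists_card_common_ge s c₁ hc₁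
  obtain ⟨M₃, hM₃⟩ := exists_nat_ge ((s : ℝ) / c₂)
  rw [div_le_iff₀ hc₂] at hM₃
  refine ⟨M₁ + M₂ + M₃ + 1, ?_⟩
  intro α X Y Z E hX hY hZ hE
  have hYZ : 0 < (Y ×ˢ Z).card := by
    rw [Finset.card_product]
    exact Nat.mul_pos (by omega) (by omega)
  obtain ⟨S₁, hS₁, hS₁c, h₁⟩ := H₁ X (Y ×ˢ Z) (fun x p => E x p.1 p.2) (by omega) hYZ
    (by rw [Finset.card_product]; push_cast; exact hE)
  have e : ((Y ×ˢ Z).filter (fun p => ∀ x ∈ S₁, E x p.1 p.2)).card =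
      ∑ y ∈ Y, (Z.filter (fun z => ∀ x ∈ S₁, E x y z)).card := by
    simp only [Finset.card_filter, Finset.sum_product]
  obtain ⟨S₂, hS₂, hS₂c, h₂⟩ := H₂ Y Z (fun y z => ∀ x ∈ S₁, E x y z) (by omega) (by omega)
    (by
      have h₁' : c₁ * (Y.card * Z.card) ≤
          ∑ y ∈ Y, ((Z.filter (fun z => ∀ x ∈ S₁, E x y z)).card : ℝ) := by
        rw [Finset.card_product] at h₁
        push_cast at h₁
        refine h₁.trans (le_of_eq ?_)
        rw [← Nat.cast_sum, ← e]
      rw [mul_assoc]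
      convert h₁')
  have h₃ : s ≤ (Z.filter (fun z => ∀ y ∈ S₂, ∀ x ∈ S₁, E x y z)).card := by
    have hZ' : (M₃ : ℝ) ≤ Z.card := by exact_mod_cast (by omega : M₃ ≤ Z.card)
    have : (s : ℝ) ≤ ((Z.filter (fun z => ∀ y ∈ S₂, ∀ x ∈ S₁, E x y z)).card : ℝ) := by
      refine le_trans (by nlinarith) (h₂.trans (le_of_eq ?_))
      congr!
    exact_mod_cast this
  obtain ⟨S₃, hS₃, hS₃c⟩ := Finset.exists_subset_card_eq h₃
  exact ⟨S₁, hS₁, S₂, hS₂, S₃, hS₃.trans (Finset.filter_subset _ _), hS₁c, hS₂c, hS₃c,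
    fun x hx y hy z hz => (Finset.mem_filter.1 (hS₃ hz)).2 y hy x hx⟩

/-- A tournament on at least `2 ^ t` vertices contains a transitive subtournament of order `t`. -/
lemma IsTournament.exists_pairwise {V : Type*} {T : V → V → Prop} (hT : IsTournament T) (t : ℕ) :
    ∀ S : Finset V, 2 ^ t ≤ S.card → ∃ l : List V, l.length = t ∧ l.Pairwise T ∧ ∀ x ∈ l, x ∈ S := by
  classical
  induction t with
  | zero => exact fun S _ => ⟨[], rfl, List.Pairwise.nil, by simp⟩
  | succ t ih =>
    intro S hS
    obtain ⟨v, hv⟩ : S.Nonempty := Finset.card_pos.1 (lt_of_lt_of_le (by positivity) hS)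
    have h1 := Finset.card_erase_of_mem hv
    have h2 := Finset.card_filter_add_card_filter_not (s := S.erase v) (T v)
    rw [pow_succ] at hS
    by_cases h : 2 ^ t ≤ ((S.erase v).filter (T v)).card
    · obtain ⟨l, hl, hp, hm⟩ := ih _ h
      refine ⟨v :: l, by simp [hl], List.pairwise_cons.2 ⟨fun x hx => ?_, hp⟩, ?_⟩
      · exact (Finset.mem_filter.1 (hm x hx)).2
      · intro x hx
        rcases List.mem_cons.1 hx with rfl | hx
        · exact hv
        · exact Finset.mem_of_mem_erase (Finset.mem_filter.1 (hm x hx)).1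
    · obtain ⟨l, hl, hp, hm⟩ := ih ((S.erase v).filter (fun x => ¬ T v x)) (by omega)
      refine ⟨l ++ [v], by simp [hl], List.pairwise_append.2 ⟨hp, by simp, ?_⟩, ?_⟩
      · intro x hx y hy
        rw [List.mem_singleton] at hy
        subst hy
        obtain ⟨hx1, hx2⟩ := Finset.mem_filter.1 (hm x hx)
        exact (hT.2 _ _ (Finset.ne_of_mem_erase hx1)).2 hx2
      · intro x hx
        rcases List.mem_append.1 hx with hx | hx
        · exact Finset.mem_of_mem_erase (Finset.mem_filter.1 (hm x hx)).1
        · rw [List.mem_singleton] at hx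
          exact hx ▸ hv

/-- A cyclic triple of complete joins between large sets yields a copy of `𝒰_t`. -/
lemma IsTournament.containsU_of_box {V : Type*} {T : V → V → Prop} (hT : IsTournament T) (t : ℕ)
    (S : Fin 3 → Finset V) (hS : ∀ i, 2 ^ t ≤ (S i).card)
    (h : ∀ i, ∀ x ∈ S i, ∀ y ∈ S (i + 1), T x y) : ContainsU T t := by
  choose l hl hp hm using fun i => hT.exists_pairwise t (S i) (hS i)
  let f : Fin 3 × Fin t → V := fun p => (l p.1)[p.2.1]'(by rw [hl]; exact p.2.2)
  have hf : ∀ p q, UPat t p q → T (f p) (f q) := by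
    rintro ⟨i, a⟩ ⟨j, b⟩ (⟨hij, hab⟩ | hij)
    · obtain rfl : i = j := hij
      exact List.pairwise_iff_getElem.1 (hp i) _ _ _ _ hab
    · obtain rfl : j = i + 1 := hij
      exact h i _ (hm _ _ (List.getElem_mem _)) _ (hm _ _ (List.getElem_mem _))
  refine ⟨f, ?_, hf⟩
  rintro ⟨i, a⟩ ⟨j, b⟩ hfe
  by_contra hne
  have key : UPat t (i, a) (j, b) ∨ UPat t (j, b) (i, a) := by
    unfold UPat
    by_cases hij : i = j
    · subst hij
      have : a ≠ b := fun h => hne (by rw [h])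
      rcases lt_or_gt_of_ne this with h | h
      · exact Or.inl (Or.inl ⟨rfl, h⟩)
      · exact Or.inr (Or.inl ⟨rfl, h⟩)
    · have : j = i + 1 ∨ i = j + 1 := by
        clear hfe hne hf f
        revert i j
        decide
      exact this.imp Or.inr Or.inr
  rcases key with k | k
  · have := hf _ _ k
    rw [hfe] at this
    exact hT.1 _ this
  · have := hf _ _ k
    rw [hfe] at this
    exact hT.1 _ this

open Classical in
/-- A tournament without `𝒰_t` has few cyclic triangles across any three large vertex sets. -/
lemma sum_card_cyclic_lt (t : ℕ) (c : ℝ) (hc : 0 < c) :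
    ∃ M : ℕ, ∀ {V : Type} {T : V → V → Prop}, IsTournament T → ¬ ContainsU T t →
      ∀ X Y Z : Finset V, M ≤ X.card → M ≤ Y.card → M ≤ Z.card →
      ∑ x ∈ X, (((Y ×ˢ Z).filter (fun p => T x p.1 ∧ T p.1 p.2 ∧ T p.2 x)).card : ℝ) <
        c * X.card * (Y.card * Z.card) := by
  obtain ⟨M, hM⟩ := exists_box_of_dense (2 ^ t) c hc
  refine ⟨M, fun {V T} hT hU X Y Z hX hY hZ => ?_⟩
  by_contra! hcon
  obtain ⟨S₁, -, S₂, -, S₃, -, h₁, h₂, h₃, h⟩ :=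
    hM X Y Z (fun x y z => T x y ∧ T y z ∧ T z x) hX hY hZ (hcon.trans (le_of_eq (by congr!)))
  have ne : ∀ S : Finset V, S.card = 2 ^ t → S.Nonempty := fun S hS =>
    Finset.card_pos.1 (hS ▸ by positivity)
  obtain ⟨x₀, hx₀⟩ := ne _ h₁
  obtain ⟨y₀, hy₀⟩ := ne _ h₂
  obtain ⟨z₀, hz₀⟩ := ne _ h₃
  refine hU (hT.containsU_of_box t ![S₁, S₂, S₃] ?_ ?_)
  · intro i
    fin_cases i
    · exact h₁.ge
    · exact h₂.ge
    · exact h₃.ge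
  · intro i
    fin_cases i
    · exact fun x hx y hy => (h x hx y hy z₀ hz₀).1
    · exact fun y hy z hz => (h x₀ hx₀ y hy z hz).2.1
    · exact fun z hz x hx => (h x hx y₀ hy₀ z hz).2.2

open Classical in
/-- The number of pairs in `S` that are backward with respect to the ranking `r`. -/
noncomputable def backIn {V : Type*} (T : V → V → Prop) (S : Finset V) (r : V → ℤ) : ℕ :=
  ((S ×ˢ S).filter (fun p => r p.1 < r p.2 ∧ T p.2 p.1)).card

open Classical in
/-- A tournament on `m ≥ 6` vertices has at least `m ^ 3 / 12` directed paths on three vertices. -/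
lemma IsTournament.card_pow_le_sum_paths {V : Type*} {T : V → V → Prop} (hT : IsTournament T)
    (W : Finset V) (hW : 6 ≤ W.card) :
    W.card ^ 3 ≤ 12 * ∑ v ∈ W, (W.filter (T v)).card * (W.filter (fun x => T x v)).card := by
  have swap₁ : ∀ f : V → V → V → ℕ, ∑ x ∈ W, ∑ y ∈ W, ∑ z ∈ W, f y x z =
      ∑ x ∈ W, ∑ y ∈ W, ∑ z ∈ W, f x y z := fun f => Finset.sum_comm
  have swap₂ : ∀ f : V → V → V → ℕ, ∑ x ∈ W, ∑ y ∈ W, ∑ z ∈ W, f x z y =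
      ∑ x ∈ W, ∑ y ∈ W, ∑ z ∈ W, f x y z :=
    fun f => Finset.sum_congr rfl fun _ _ => Finset.sum_comm
  let q : V → V → V → ℕ := fun x y z => if T x y ∧ T y z then 1 else 0
  let e : V → V → V → ℕ := fun x y _ => if x = y then 1 else 0
  have hq : ∑ x ∈ W, ∑ y ∈ W, ∑ z ∈ W, q x y z =
      ∑ v ∈ W, (W.filter (T v)).card * (W.filter (fun x => T x v)).card := by
    rw [← swap₁ q]
    refine Finset.sum_congr rfl fun v _ => ?_
    rw [mul_comm, Finset.card_filter, Finset.card_filter, Finset.sum_mul_sum]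
    refine Finset.sum_congr rfl fun x _ => Finset.sum_congr rfl fun z _ => ?_
    simp only [q]
    by_cases h1 : T x v <;> by_cases h2 : T v z <;> simp [h1, h2]
  have he : ∑ x ∈ W, ∑ y ∈ W, ∑ z ∈ W, e x y z = W.card ^ 2 := by
    simp only [e, Finset.sum_const, smul_eq_mul, mul_ite, mul_one, mul_zero, Finset.sum_ite_eq]
    rw [← Finset.sum_filter, Finset.filter_true_of_mem (fun _ h => h), Finset.sum_const, sq,
      smul_eq_mul]
  have hpt : ∀ x y z, 1 ≤ q x y z + q x z y + q y x z + q y z x + q z x y + q z y x +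
      e x y z + e x z y + e y z x := by
    intro x y z
    simp only [q, e]
    by_cases hxy : x = y
    · simp only [hxy, if_true]
      omega
    by_cases hxz : x = z
    · simp only [hxz, if_true]
      omega
    by_cases hyz : y = z
    · simp only [hyz, if_true]
      omega
    have h1 := hT.2 x y hxy
    have h2 := hT.2 x z hxz
    have h3 := hT.2 y z hyz
    simp only [h1, h2, h3]
    by_cases a1 : T y x <;> by_cases a2 : T z x <;> by_cases a3 : T z y <;> simp [a1, a2, a3, hxy, hxz, hyz]
  have hsum : ∑ x ∈ W, ∑ y ∈ W, ∑ _z ∈ W, 1 ≤ ∑ x ∈ W, ∑ y ∈ W, ∑ z ∈ W,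
      (q x y z + q x z y + q y x z + q y z x + q z x y + q z y x +
      e x y z + e x z y + e y z x) :=
    Finset.sum_le_sum fun x _ => Finset.sum_le_sum fun y _ => Finset.sum_le_sum fun z _ => hpt x y z
  simp only [Finset.sum_add_distrib] at hsum
  have r2 := swap₂ q
  have r3 := swap₁ q
  have r4 : ∑ x ∈ W, ∑ y ∈ W, ∑ z ∈ W, q y z x = ∑ x ∈ W, ∑ y ∈ W, ∑ z ∈ W, q x y z :=
    (swap₁ fun x y z => q x z y).trans r2
  have r5 : ∑ x ∈ W, ∑ y ∈ W, ∑ z ∈ W, q z x y = ∑ x ∈ W, ∑ y ∈ W, ∑ z ∈ W, q x y z :=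
    (swap₂ fun x y z => q y x z).trans r3
  have r6 : ∑ x ∈ W, ∑ y ∈ W, ∑ z ∈ W, q z y x = ∑ x ∈ W, ∑ y ∈ W, ∑ z ∈ W, q x y z :=
    (swap₁ fun x y z => q z x y).trans r5
  have s2 := swap₂ e
  have s3 : ∑ x ∈ W, ∑ y ∈ W, ∑ z ∈ W, e y z x = ∑ x ∈ W, ∑ y ∈ W, ∑ z ∈ W, e x y z :=
    (swap₁ fun x y z => e x z y).trans s2
  rw [r2, r3, r4, r5, r6, s2, s3, he, hq] at hsum
  simp only [Finset.sum_const, smul_eq_mul, mul_one] at hsum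
  nlinarith [Nat.mul_le_mul_right (W.card ^ 2) hW]

open Classical in
/-- In a large tournament without `𝒰_t` some vertex has few edges going from its
out-neighbourhood to its in-neighbourhood. -/
lemma exists_pivot (t : ℕ) (δ : ℝ) (hδ : 0 < δ) :
    ∃ M : ℕ, ∀ {V : Type} {T : V → V → Prop}, IsTournament T → ¬ ContainsU T t →
      ∀ W : Finset V, M ≤ W.card → ∃ v ∈ W,
        (((W ×ˢ W).filter (fun p => T v p.1 ∧ T p.1 p.2 ∧ T p.2 v)).card : ℝ) ≤
          2 * δ * ((W.filter (T v)).card * (W.filter (fun x => T x v)).card) := by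
  obtain ⟨M, hM⟩ := sum_card_cyclic_lt t (δ / 6) (by positivity)
  refine ⟨M + 6, fun {V T} hT hU W hW => ?_⟩
  by_contra! hcon
  have h1 := hM hT hU W W W (by omega) (by omega) (by omega)
  have h2 := Finset.sum_le_sum fun v hv => (hcon v hv).le
  have h3 := hT.card_pow_le_sum_paths W (by omega)
  have h4 : (W.card : ℝ) ^ 3 ≤
      12 * ∑ v ∈ W, ((W.filter (T v)).card : ℝ) * (W.filter (fun x => T x v)).card := by
    exact_mod_cast h3
  rw [← Finset.mul_sum] at h2
  nlinarith

open Classical in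
/-- Every finite vertex set of a tournament without `𝒰_t` has an ordering with few backward
edges. -/
lemma exists_ranking_backIn_le (t : ℕ) (δ : ℝ) (hδ : 0 < δ) :
    ∃ M : ℕ, ∀ {V : Type} {T : V → V → Prop}, IsTournament T → ¬ ContainsU T t →
      ∀ W : Finset V, ∃ r : V → ℤ, Set.InjOn r W ∧ (∀ x ∈ W, 0 ≤ r x ∧ r x < W.card) ∧
        (backIn T W r : ℝ) ≤ δ * W.card ^ 2 + M * W.card := by
  obtain ⟨M, hM⟩ := exists_pivot t δ hδ
  refine ⟨M, fun {V T} hT hU W => ?_⟩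
  induction hm : W.card using Nat.strong_induction_on generalizing W with
  | _ m ih =>
  subst hm
  by_cases hW : W.card < M
  · refine ⟨fun x => if h : x ∈ W then (W.equivFin ⟨x, h⟩ : ℕ) else 0, ?_, ?_, ?_⟩
    · intro x hx y hy hxy
      have hx' : x ∈ W := hx
      have hy' : y ∈ W := hy
      simp only [hx', hy', dif_pos, Nat.cast_inj] at hxy
      have := W.equivFin.injective (Fin.ext hxy)
      exact congrArg Subtype.val this
    · intro x hx
      simp only [hx, dif_pos]
      exact ⟨by positivity, by exact_mod_cast (W.equivFin ⟨x, hx⟩).2⟩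
    · have h1 : backIn T W (fun x => if h : x ∈ W then (W.equivFin ⟨x, h⟩ : ℕ) else 0) ≤
          W.card * W.card := (Finset.card_filter_le _ _).trans (Finset.card_product _ _).le
      have h2 : W.card * W.card ≤ M * W.card := Nat.mul_le_mul_right _ hW.le
      have h3 := h1.trans h2
      have h4 : (0 : ℝ) ≤ δ * W.card ^ 2 := by positivity
      have h5 : (backIn T W (fun x => if h : x ∈ W then (W.equivFin ⟨x, h⟩ : ℕ) else 0) : ℝ) ≤
        M * W.card := by exact_mod_cast h3
      linarith
  obtain ⟨v, hv, hpiv⟩ := hM hT hU W (by omega)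
  set O := W.filter (T v) with hO
  set I := W.filter (fun x => T x v) with hI
  have hasymm : ∀ x y, T x y → ¬ T y x := by
    intro x y h
    have hne : x ≠ y := fun e => hT.1 x (by rw [← e] at h; exact h)
    exact (hT.2 x y hne).1 h
  have hcases : ∀ x ∈ W, x = v ∨ (x ≠ v ∧ T x v ∧ ¬ T v x) ∨ (x ≠ v ∧ T v x ∧ ¬ T x v) := by
    intro x _
    by_cases hxv : x = v
    · exact Or.inl hxv
    · have := hT.2 x v hxv
      tauto
  have hcard : O.card + I.card + 1 = W.card := by
    have h1 : (W.erase v).card + 1 = W.card := Finset.card_erase_add_one hv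
    have h2 := Finset.card_filter_add_card_filter_not (s := W.erase v) (T v)
    have h3 : (W.erase v).filter (T v) = O := by
      ext x
      simp only [hO, Finset.mem_filter, Finset.mem_erase]
      exact ⟨fun h => ⟨h.1.2, h.2⟩, fun h => ⟨⟨fun e => hT.1 v (e ▸ h.2), h.1⟩, h.2⟩⟩
    have h4 : (W.erase v).filter (fun x => ¬ T v x) = I := by
      ext x
      simp only [hI, Finset.mem_filter, Finset.mem_erase]
      constructor
      · exact fun h => ⟨h.1.2, (hT.2 _ _ h.1.1).2 h.2⟩
      · exact fun h => ⟨⟨fun e => hT.1 v (e ▸ h.2), h.1⟩, hasymm _ _ h.2⟩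
    rw [h3, h4] at h2
    omega
  obtain ⟨r₁, inj₁, bd₁, hr₁⟩ := ih I.card (by omega) I rfl
  obtain ⟨r₂, inj₂, bd₂, hr₂⟩ := ih O.card (by omega) O rfl
  let r : V → ℤ := fun x => if x = v then I.card else if T x v then r₁ x else I.card + 1 + r₂ x
  have rv : r v = I.card := by simp [r]
  have rI : ∀ x, x ≠ v → T x v → r x = r₁ x := fun x h1 h2 => by simp [r, h1, h2]
  have rO : ∀ x, x ≠ v → ¬ T x v → r x = I.card + 1 + r₂ x := fun x h1 h2 => by simp [r, h1, h2]
  have memI : ∀ x ∈ W, T x v → x ∈ I := fun x h1 h2 => Finset.mem_filter.2 ⟨h1, h2⟩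
  have memO : ∀ x ∈ W, T v x → x ∈ O := fun x h1 h2 => Finset.mem_filter.2 ⟨h1, h2⟩
  refine ⟨r, ?_, ?_, ?_⟩
  · intro x hx y hy hxy
    rcases hcases x hx with rfl | ⟨x1, x2, x3⟩ | ⟨x1, x2, x3⟩ <;>
      rcases hcases y hy with hyv | ⟨y1, y2, y3⟩ | ⟨y1, y2, y3⟩
    · exact hyv.symm
    · have := bd₁ y (memI y hy y2)
      rw [rv, rI y y1 y2] at hxy
      omega
    · have := bd₂ y (memO y hy y2)
      rw [rv, rO y y1 y3] at hxy
      omega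
    · have := bd₁ x (memI x hx x2)
      rw [hyv, rv, rI x x1 x2] at hxy
      omega
    · rw [rI x x1 x2, rI y y1 y2] at hxy
      exact inj₁ (memI x hx x2) (memI y hy y2) hxy
    · have := bd₁ x (memI x hx x2)
      have := bd₂ y (memO y hy y2)
      rw [rI x x1 x2, rO y y1 y3] at hxy
      omega
    · have := bd₂ x (memO x hx x2)
      rw [hyv, rv, rO x x1 x3] at hxy
      omega
    · have := bd₁ y (memI y hy y2)
      have := bd₂ x (memO x hx x2)
      rw [rO x x1 x3, rI y y1 y2] at hxy
      omega
    · rw [rO x x1 x3, rO y y1 y3] at hxy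
      exact inj₂ (memO x hx x2) (memO y hy y2) (by linarith)
  · intro x hx
    rcases hcases x hx with rfl | ⟨x1, x2, x3⟩ | ⟨x1, x2, x3⟩
    · rw [rv]
      omega
    · have := bd₁ x (memI x hx x2)
      rw [rI x x1 x2]
      omega
    · have := bd₂ x (memO x hx x2)
      rw [rO x x1 x3]
      omega
  · have hsub : (W ×ˢ W).filter (fun p => r p.1 < r p.2 ∧ T p.2 p.1) ⊆
        ((I ×ˢ I).filter (fun p => r₁ p.1 < r₁ p.2 ∧ T p.2 p.1) ∪
          (O ×ˢ O).filter (fun p => r₂ p.1 < r₂ p.2 ∧ T p.2 p.1)) ∪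
        ((W ×ˢ W).filter (fun p => T v p.1 ∧ T p.1 p.2 ∧ T p.2 v)).image Prod.swap := by
      rintro ⟨x, y⟩ hp
      simp only [Finset.mem_filter, Finset.mem_product] at hp
      obtain ⟨⟨hx, hy⟩, hlt, hyx⟩ := hp
      simp only [Finset.mem_union, Finset.mem_filter, Finset.mem_product, Finset.mem_image,
        Prod.exists, Prod.swap_prod_mk, Prod.mk.injEq]
      rcases hcases x hx with rfl | ⟨x1, x2, x3⟩ | ⟨x1, x2, x3⟩ <;>
        rcases hcases y hy with hyv | ⟨y1, y2, y3⟩ | ⟨y1, y2, y3⟩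
      · rw [hyv] at hlt
        exact absurd hlt (lt_irrefl _)
      · have := bd₁ y (memI y hy y2)
        rw [rv, rI y y1 y2] at hlt
        omega
      · exact absurd hyx y3
      · rw [hyv] at hyx
        exact absurd hyx x3
      · rw [rI x x1 x2, rI y y1 y2] at hlt
        exact Or.inl (Or.inl ⟨⟨memI x hx x2, memI y hy y2⟩, hlt, hyx⟩)
      · exact Or.inr ⟨y, x, ⟨⟨hy, hx⟩, y2, hyx, x2⟩, rfl, rfl⟩
      · have := bd₂ x (memO x hx x2)
        rw [hyv, rv, rO x x1 x3] at hlt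
        omega
      · have := bd₁ y (memI y hy y2)
        have := bd₂ x (memO x hx x2)
        rw [rO x x1 x3, rI y y1 y2] at hlt
        omega
      · rw [rO x x1 x3, rO y y1 y3] at hlt
        exact Or.inl (Or.inr ⟨⟨memO x hx x2, memO y hy y2⟩, by linarith, hyx⟩)
    have h1 : backIn T W r ≤ backIn T I r₁ + backIn T O r₂ +
        ((W ×ˢ W).filter (fun p => T v p.1 ∧ T p.1 p.2 ∧ T p.2 v)).card :=
      (Finset.card_le_card hsub).trans ((Finset.card_union_le _ _).trans
        (add_le_add (Finset.card_union_le _ _) Finset.card_image_le))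
    have h2 : (backIn T W r : ℝ) ≤ backIn T I r₁ + backIn T O r₂ +
        ((W ×ˢ W).filter (fun p => T v p.1 ∧ T p.1 p.2 ∧ T p.2 v)).card := by exact_mod_cast h1
    have h3 : (W.card : ℝ) = O.card + I.card + 1 := by exact_mod_cast hcard.symm
    rw [h3]
    have : (0 : ℝ) ≤ O.card := by positivity
    have : (0 : ℝ) ≤ I.card := by positivity
    have : (0 : ℝ) ≤ M := by positivity
    nlinarith [mul_nonneg hδ.le (by positivity : (0 : ℝ) ≤ O.card),
      mul_nonneg hδ.le (by positivity : (0 : ℝ) ≤ I.card)]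

/-- An ordering minimising the number of backward edges is at least as good as the ordering by any
injective key. -/
lemma backCount_le_ncard_key {N : ℕ} {T : Fin N → Fin N → Prop} {σ : Equiv.Perm (Fin N)}
    (hσ : ∀ τ : Equiv.Perm (Fin N), backCount T σ ≤ backCount T τ) {α : Type*} [LinearOrder α]
    (g : Fin N → α) (hg : Function.Injective g) :
    backCount T σ ≤ {p : Fin N × Fin N | g p.1 < g p.2 ∧ T (σ p.2) (σ p.1)}.ncard := by
  refine (hσ ((Tuple.sort g).trans σ)).trans ?_
  have hmono : StrictMono (g ∘ Tuple.sort g) :=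
    (Tuple.monotone_sort g).strictMono_of_injective (hg.comp (Tuple.sort g).injective)
  refine Set.ncard_le_ncard_of_injOn (fun p => (Tuple.sort g p.1, Tuple.sort g p.2)) ?_ ?_
    (Set.toFinite _)
  · rintro ⟨x, y⟩ ⟨hxy, h⟩
    exact ⟨hmono hxy, h⟩
  · rintro ⟨x, y⟩ _ ⟨x', y'⟩ _ h
    simpa using h

open Classical in
/-- The restriction of an optimal ordering to an interval is optimal. -/
lemma backIn_Icc_le {N : ℕ} {T : Fin N → Fin N → Prop} {σ : Equiv.Perm (Fin N)}
    (hσ : ∀ τ : Equiv.Perm (Fin N), backCount T σ ≤ backCount T τ) (i j : Fin N)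
    (r : Fin N → ℤ) (hr : Set.InjOn r (Finset.Icc i j)) :
    backIn (fun x y => T (σ x) (σ y)) (Finset.Icc i j) (fun x => ((x : ℕ) : ℤ)) ≤
      backIn (fun x y => T (σ x) (σ y)) (Finset.Icc i j) r := by
  let g : Fin N → ℤ ×ₗ ℤ := fun x =>
    toLex (if x < i then 0 else if x ≤ j then 1 else 2,
      if i ≤ x ∧ x ≤ j then r x else ((x : ℕ) : ℤ))
  have hlt : ∀ x y, ¬ ((i ≤ x ∧ x ≤ j) ∧ (i ≤ y ∧ y ≤ j)) → (g x < g y ↔ x < y) := by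
    intro x y hxy
    simp only [g, Prod.Lex.toLex_lt_toLex, Fin.lt_def, Fin.le_def] at hxy ⊢
    split_ifs <;> omega
  have hin : ∀ x y, (i ≤ x ∧ x ≤ j) → (i ≤ y ∧ y ≤ j) → (g x < g y ↔ r x < r y) := by
    intro x y hx hy
    simp [g, Prod.Lex.toLex_lt_toLex, hx, hy, not_lt.2 hx.1, not_lt.2 hy.1]
  have hg : Function.Injective g := by
    intro x y hxy
    by_cases h : (i ≤ x ∧ x ≤ j) ∧ (i ≤ y ∧ y ≤ j)
    · refine hr (Finset.mem_coe.2 (Finset.mem_Icc.2 h.1)) (Finset.mem_coe.2 (Finset.mem_Icc.2 h.2)) ?_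
      have h1 := hin x y h.1 h.2
      have h2 := hin y x h.2 h.1
      rw [hxy] at h1 h2
      simp only [lt_irrefl, false_iff, not_lt] at h1 h2
      exact le_antisymm h2 h1
    · have h1 := hlt x y h
      have h2 := hlt y x (fun h' => h h'.symm)
      rw [hxy] at h1 h2
      simp only [lt_irrefl, false_iff, not_lt] at h1 h2
      exact le_antisymm h2 h1
  have key := backCount_le_ncard_key hσ g hg
  rw [backCount, Set.ncard_eq_toFinset_card', Set.ncard_eq_toFinset_card', Set.toFinset_ofPred,
    Set.toFinset_ofPred,
    ← Finset.card_filter_add_card_filter_not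
      (fun p : Fin N × Fin N => (i ≤ p.1 ∧ p.1 ≤ j) ∧ (i ≤ p.2 ∧ p.2 ≤ j)),
    ← Finset.card_filter_add_card_filter_not
      (s := Finset.univ.filter fun p : Fin N × Fin N => g p.1 < g p.2 ∧ T (σ p.2) (σ p.1))
      (fun p : Fin N × Fin N => (i ≤ p.1 ∧ p.1 ≤ j) ∧ (i ≤ p.2 ∧ p.2 ≤ j))] at key
  simp only [Finset.filter_filter] at key
  have e1 : (Finset.univ.filter fun p : Fin N × Fin N => (g p.1 < g p.2 ∧ T (σ p.2) (σ p.1)) ∧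
      ¬ ((i ≤ p.1 ∧ p.1 ≤ j) ∧ (i ≤ p.2 ∧ p.2 ≤ j))) =
      (Finset.univ.filter fun p : Fin N × Fin N => (p.1 < p.2 ∧ T (σ p.2) (σ p.1)) ∧
      ¬ ((i ≤ p.1 ∧ p.1 ≤ j) ∧ (i ≤ p.2 ∧ p.2 ≤ j))) := by
    refine Finset.filter_congr fun p _ => ?_
    constructor
    · exact fun h => ⟨⟨(hlt _ _ h.2).1 h.1.1, h.1.2⟩, h.2⟩
    · exact fun h => ⟨⟨(hlt _ _ h.2).2 h.1.1, h.1.2⟩, h.2⟩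
  have e2 : (Finset.univ.filter fun p : Fin N × Fin N => (g p.1 < g p.2 ∧ T (σ p.2) (σ p.1)) ∧
      ((i ≤ p.1 ∧ p.1 ≤ j) ∧ (i ≤ p.2 ∧ p.2 ≤ j))).card =
      backIn (fun x y => T (σ x) (σ y)) (Finset.Icc i j) r := by
    unfold backIn
    congr 1
    ext p
    simp only [Finset.mem_filter, Finset.mem_univ, true_and, Finset.mem_product, Finset.mem_Icc]
    constructor
    · exact fun h => ⟨h.2, (hin _ _ h.2.1 h.2.2).1 h.1.1, h.1.2⟩
    · exact fun h => ⟨⟨(hin _ _ h.1.1 h.1.2).2 h.2.1, h.2.2⟩, h.1⟩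
  have e3 : (Finset.univ.filter fun p : Fin N × Fin N => (p.1 < p.2 ∧ T (σ p.2) (σ p.1)) ∧
      ((i ≤ p.1 ∧ p.1 ≤ j) ∧ (i ≤ p.2 ∧ p.2 ≤ j))).card =
      backIn (fun x y => T (σ x) (σ y)) (Finset.Icc i j) (fun x => ((x : ℕ) : ℤ)) := by
    unfold backIn
    congr 1
    ext p
    simp only [Finset.mem_filter, Finset.mem_univ, true_and, Finset.mem_product, Finset.mem_Icc,
      Nat.cast_lt, Fin.val_fin_lt]
    tauto
  rw [e1, e2, e3] at key
  omega

open Classical in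
/-- Adding a vertex `k` to `S` adds the backward pairs containing `k`. -/
lemma backIn_insert {V : Type*} [DecidableEq V] (T : V → V → Prop) (S : Finset V) (r : V → ℤ) (k : V)
    (hk : k ∉ S) :
    backIn T (insert k S) r = backIn T S r + (S.filter (fun x => r x < r k ∧ T k x)).card +
      (S.filter (fun x => r k < r x ∧ T x k)).card := by
  have h : (insert k S ×ˢ insert k S).filter (fun p => r p.1 < r p.2 ∧ T p.2 p.1) =
      ((S ×ˢ S).filter (fun p => r p.1 < r p.2 ∧ T p.2 p.1) ∪
        (S.filter (fun x => r x < r k ∧ T k x)).image (fun x => (x, k))) ∪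
        (S.filter (fun x => r k < r x ∧ T x k)).image (fun x => (k, x)) := by
    ext ⟨x, y⟩
    simp only [Finset.mem_filter, Finset.mem_product, Finset.mem_insert, Finset.mem_union,
      Finset.mem_image, Prod.mk.injEq]
    constructor
    · rintro ⟨⟨rfl | hx, rfl | hy⟩, hlt, hT⟩
      · exact absurd hlt (lt_irrefl _)
      · exact Or.inr ⟨y, ⟨hy, hlt, hT⟩, rfl, rfl⟩
      · exact Or.inl (Or.inr ⟨x, ⟨hx, hlt, hT⟩, rfl, rfl⟩)
      · exact Or.inl (Or.inl ⟨⟨hx, hy⟩, hlt, hT⟩)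
    · rintro ((⟨⟨hx, hy⟩, hlt⟩ | ⟨z, ⟨hz, hlt⟩, rfl, rfl⟩) | ⟨z, ⟨hz, hlt⟩, rfl, rfl⟩)
      · exact ⟨⟨Or.inr hx, Or.inr hy⟩, hlt⟩
      · exact ⟨⟨Or.inr hz, Or.inl rfl⟩, hlt⟩
      · exact ⟨⟨Or.inl rfl, Or.inr hz⟩, hlt⟩
  unfold backIn
  rw [h, Finset.card_union_of_disjoint, Finset.card_union_of_disjoint, Finset.card_image_of_injective,
    Finset.card_image_of_injective]
  · exact fun x y h => (Prod.mk.injEq _ _ _ _ ▸ h).2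
  · exact fun x y h => (Prod.mk.injEq _ _ _ _ ▸ h).1
  · rw [Finset.disjoint_left]
    rintro ⟨x, y⟩ h1 h2
    simp only [Finset.mem_filter, Finset.mem_product, Finset.mem_image, Prod.mk.injEq] at h1 h2
    obtain ⟨z, _, _, rfl⟩ := h2
    exact hk h1.1.2
  · rw [Finset.disjoint_left]
    rintro ⟨x, y⟩ h1 h2
    simp only [Finset.mem_filter, Finset.mem_product, Finset.mem_image, Finset.mem_union,
      Prod.mk.injEq] at h1 h2
    obtain ⟨z, hz, rfl, rfl⟩ := h2
    rcases h1 with h1 | ⟨w, hw, rfl, rfl⟩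
    · exact hk h1.1.1
    · exact hk hw.1

open Classical in
lemma backIn_congr {V : Type*} (T : V → V → Prop) (S : Finset V) {r r' : V → ℤ}
    (h : ∀ x ∈ S, r x = r' x) : backIn T S r = backIn T S r' := by
  unfold backIn
  congr 1
  refine Finset.filter_congr fun p hp => ?_
  rw [Finset.mem_product] at hp
  rw [h _ hp.1, h _ hp.2]

open Classical in
/-- In an optimal ordering, a vertex has at most as many out-neighbours as in-neighbours in any
interval ending just before it. -/
lemma card_out_Ico_le_card_in {N : ℕ} {T : Fin N → Fin N → Prop} {σ : Equiv.Perm (Fin N)}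
    (hσ : ∀ τ : Equiv.Perm (Fin N), backCount T σ ≤ backCount T τ) (j k : Fin N) (hjk : j ≤ k) :
    ((Finset.Ico j k).filter (fun x => T (σ k) (σ x))).card ≤
      ((Finset.Ico j k).filter (fun x => T (σ x) (σ k))).card := by
  let r : Fin N → ℤ := fun x => if x = k then ((j : ℕ) : ℤ) - 1 else ((x : ℕ) : ℤ)
  have hr : Set.InjOn r (Finset.Icc j k) := by
    intro x hx y hy hxy
    simp only [Finset.coe_Icc, Set.mem_Icc, Fin.le_def] at hx hy
    simp only [r, Fin.ext_iff] at hxy ⊢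
    split_ifs at hxy <;> omega
  have key := backIn_Icc_le hσ j k r hr
  rw [← Finset.Ico_insert_right hjk, backIn_insert _ _ _ _ Finset.right_notMem_Ico,
    backIn_insert _ _ _ _ Finset.right_notMem_Ico,
    backIn_congr _ _ (r := r) (r' := fun x => ((x : ℕ) : ℤ))
      (fun x hx => if_neg (Finset.mem_Ico.1 hx).2.ne)] at key
  have e1 : (Finset.Ico j k).filter (fun x : Fin N => ((x : ℕ) : ℤ) < ((k : ℕ) : ℤ) ∧ T (σ k) (σ x)) =
      (Finset.Ico j k).filter (fun x => T (σ k) (σ x)) := by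
    refine Finset.filter_congr fun x hx => and_iff_right ?_
    have := (Finset.mem_Ico.1 hx).2
    exact_mod_cast this
  have e2 : ((Finset.Ico j k).filter (fun x => r x < r k ∧ T (σ k) (σ x))).card = 0 := by
    rw [Finset.card_eq_zero, Finset.filter_eq_empty_iff]
    rintro x hx ⟨h, -⟩
    simp only [Finset.mem_Ico, Fin.le_def, Fin.lt_def] at hx
    simp only [r, if_true, Fin.ext_iff] at h
    split_ifs at h <;> omega
  have e3 : ((Finset.Ico j k).filter (fun x => r k < r x ∧ T (σ x) (σ k))).card ≤
      ((Finset.Ico j k).filter (fun x => T (σ x) (σ k))).card :=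
    Finset.card_le_card (Finset.monotone_filter_right _ fun x _ h => h.2)
  rw [e1, e2] at key
  omega

open Classical in
/-- In an optimal ordering, a vertex has at most as many in-neighbours as out-neighbours in any
interval starting just after it. -/
lemma card_in_Ioc_le_card_out {N : ℕ} {T : Fin N → Fin N → Prop} {σ : Equiv.Perm (Fin N)}
    (hσ : ∀ τ : Equiv.Perm (Fin N), backCount T σ ≤ backCount T τ) (j k : Fin N) (hjk : k ≤ j) :
    ((Finset.Ioc k j).filter (fun x => T (σ x) (σ k))).card ≤
      ((Finset.Ioc k j).filter (fun x => T (σ k) (σ x))).card := by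
  let r : Fin N → ℤ := fun x => if x = k then ((j : ℕ) : ℤ) + 1 else ((x : ℕ) : ℤ)
  have hr : Set.InjOn r (Finset.Icc k j) := by
    intro x hx y hy hxy
    simp only [Finset.coe_Icc, Set.mem_Icc, Fin.le_def] at hx hy
    simp only [r, Fin.ext_iff] at hxy ⊢
    split_ifs at hxy <;> omega
  have key := backIn_Icc_le hσ k j r hr
  rw [← Finset.Ioc_insert_left hjk, backIn_insert _ _ _ _ Finset.left_notMem_Ioc,
    backIn_insert _ _ _ _ Finset.left_notMem_Ioc,
    backIn_congr _ _ (r := r) (r' := fun x => ((x : ℕ) : ℤ))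
      (fun x hx => if_neg (Finset.mem_Ioc.1 hx).1.ne')] at key
  have e1 : (Finset.Ioc k j).filter (fun x : Fin N => ((k : ℕ) : ℤ) < ((x : ℕ) : ℤ) ∧ T (σ x) (σ k)) =
      (Finset.Ioc k j).filter (fun x => T (σ x) (σ k)) := by
    refine Finset.filter_congr fun x hx => and_iff_right ?_
    have := (Finset.mem_Ioc.1 hx).1
    exact_mod_cast this
  have e2 : ((Finset.Ioc k j).filter (fun x => r k < r x ∧ T (σ x) (σ k))).card = 0 := by
    rw [Finset.card_eq_zero, Finset.filter_eq_empty_iff]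
    rintro x hx ⟨h, -⟩
    simp only [Finset.mem_Ioc, Fin.le_def, Fin.lt_def] at hx
    simp only [r, if_true, Fin.ext_iff] at h
    split_ifs at h <;> omega
  have e3 : ((Finset.Ioc k j).filter (fun x => r x < r k ∧ T (σ k) (σ x))).card ≤
      ((Finset.Ioc k j).filter (fun x => T (σ k) (σ x))).card :=
    Finset.card_le_card (Finset.monotone_filter_right _ fun x _ h => h.2)
  rw [e1, e2] at key
  omega

/-- Every nonempty finite subset of a linear order has a median. -/
lemma exists_finset_median {α : Type*} [LinearOrder α] (A : Finset α) (hA : A.Nonempty) :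
    ∃ a ∈ A, A.card ≤ 2 * (A.filter (· ≤ a)).card ∧ A.card ≤ 2 * (A.filter (a ≤ ·)).card := by
  have hne : (A.filter (fun a => A.card ≤ 2 * (A.filter (· ≤ a)).card)).Nonempty := by
    refine ⟨A.max' hA, Finset.mem_filter.2 ⟨A.max'_mem hA, ?_⟩⟩
    rw [Finset.filter_true_of_mem fun x hx => A.le_max' x hx]
    omega
  obtain ⟨ha, ha'⟩ := Finset.mem_filter.1 (Finset.min'_mem _ hne)
  set a := (A.filter (fun a => A.card ≤ 2 * (A.filter (· ≤ a)).card)).min' hne with hadef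
  refine ⟨a, ha, ha', ?_⟩
  by_contra! hcon
  have h1 := Finset.card_filter_add_card_filter_not (s := A) (a ≤ ·)
  simp only [not_le] at h1
  have h2 : (A.filter (· < a)).Nonempty := Finset.card_pos.1 (by omega)
  obtain ⟨hb, hb'⟩ := Finset.mem_filter.1 (Finset.max'_mem _ h2)
  have h3 : A.filter (· < a) ⊆ A.filter (· ≤ (A.filter (· < a)).max' h2) := fun x hx =>
    Finset.mem_filter.2 ⟨(Finset.mem_filter.1 hx).1, Finset.le_max' _ x hx⟩
  have h4 := Finset.card_le_card h3
  have h5 := Finset.min'_le (A.filter (fun a => A.card ≤ 2 * (A.filter (· ≤ a)).card)) _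
    (Finset.mem_filter.2 ⟨hb, by omega⟩)
  exact absurd hb' (not_lt.2 h5)

open Classical in
/-- A vertex of large backward degree in an interval has many out-neighbours that all precede
many of its in-neighbours. -/
lemma exists_out_before_in {N : ℕ} {T : Fin N → Fin N → Prop} (hT : IsTournament T)
    {σ : Equiv.Perm (Fin N)}
    (hσ : ∀ τ : Equiv.Perm (Fin N), backCount T σ ≤ backCount T τ) (i j k : Fin N)
    (hk : k ∈ Finset.Icc i j) :
    ∃ A ⊆ Finset.Icc i j, ∃ B ⊆ Finset.Icc i j,
      ((Finset.Icc i j).filter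
        (fun l => (l < k ∧ T (σ k) (σ l)) ∨ (k < l ∧ T (σ l) (σ k)))).card ≤ 4 * A.card ∧
      ((Finset.Icc i j).filter
        (fun l => (l < k ∧ T (σ k) (σ l)) ∨ (k < l ∧ T (σ l) (σ k)))).card ≤ 4 * B.card ∧
      (∀ x ∈ A, T (σ k) (σ x)) ∧ (∀ y ∈ B, T (σ y) (σ k)) ∧ ∀ x ∈ A, ∀ y ∈ B, x < y := by
  rw [Finset.mem_Icc] at hk
  have hasymm : ∀ x y, T x y → ¬ T y x := by
    intro x y h
    have hne : x ≠ y := fun e => hT.1 x (by rw [← e] at h; exact h)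
    exact (hT.2 x y hne).1 h
  set D := (Finset.Icc i j).filter
    (fun l => (l < k ∧ T (σ k) (σ l)) ∨ (k < l ∧ T (σ l) (σ k))) with hD
  set L := (Finset.Ico i k).filter (fun x => T (σ k) (σ x)) with hL
  set R := (Finset.Ioc k j).filter (fun x => T (σ x) (σ k)) with hR
  have hDLR : D.card ≤ L.card + R.card := by
    refine (Finset.card_le_card ?_).trans (Finset.card_union_le _ _)
    intro x hx
    simp only [hD, hL, hR, Finset.mem_filter, Finset.mem_union, Finset.mem_Icc, Finset.mem_Ico,
      Finset.mem_Ioc] at hx ⊢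
    tauto
  by_cases hD0 : D.card = 0
  · exact ⟨∅, Finset.empty_subset _, ∅, Finset.empty_subset _, by omega, by omega, by simp, by simp,
      by simp⟩
  by_cases hLR : R.card ≤ L.card
  · obtain ⟨m, hm, h1, h2⟩ := exists_finset_median L (Finset.card_pos.1 (by omega))
    have hm' := Finset.mem_filter.1 hm
    have hmI := Finset.mem_Ico.1 hm'.1
    have h3 := card_out_Ico_le_card_in hσ m k hmI.2.le
    have h4 : L.filter (m ≤ ·) ⊆ (Finset.Ico m k).filter (fun x => T (σ k) (σ x)) := by
      intro x hx
      simp only [hL, Finset.mem_filter, Finset.mem_Ico] at hx ⊢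
      tauto
    have h5 := Finset.card_le_card h4
    refine ⟨L.filter (· ≤ m), ?_, (Finset.Ico m k).filter (fun x => T (σ x) (σ k)), ?_, by omega,
      by omega, ?_, ?_, ?_⟩
    · intro x hx
      simp only [hL, Finset.mem_filter, Finset.mem_Ico, Finset.mem_Icc] at hx ⊢
      exact ⟨hx.1.1.1, hx.1.1.2.le.trans hk.2⟩
    · intro x hx
      simp only [Finset.mem_filter, Finset.mem_Ico, Finset.mem_Icc] at hx ⊢
      exact ⟨hmI.1.trans hx.1.1, hx.1.2.le.trans hk.2⟩
    · exact fun x hx => (Finset.mem_filter.1 (Finset.mem_filter.1 hx).1).2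
    · exact fun x hx => (Finset.mem_filter.1 hx).2
    · intro x hx y hy
      refine lt_of_le_of_ne ((Finset.mem_filter.1 hx).2.trans
        (Finset.mem_Ico.1 (Finset.mem_filter.1 hy).1).1) ?_
      rintro rfl
      exact hasymm _ _ (Finset.mem_filter.1 (Finset.mem_filter.1 hx).1).2 (Finset.mem_filter.1 hy).2
  · obtain ⟨m, hm, h1, h2⟩ := exists_finset_median R (Finset.card_pos.1 (by omega))
    have hm' := Finset.mem_filter.1 hm
    have hmI := Finset.mem_Ioc.1 hm'.1
    have h3 := card_in_Ioc_le_card_out hσ m k hmI.1.le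
    have h4 : R.filter (· ≤ m) ⊆ (Finset.Ioc k m).filter (fun x => T (σ x) (σ k)) := by
      intro x hx
      simp only [hR, Finset.mem_filter, Finset.mem_Ioc] at hx ⊢
      tauto
    have h5 := Finset.card_le_card h4
    refine ⟨(Finset.Ioc k m).filter (fun x => T (σ k) (σ x)), ?_, R.filter (m ≤ ·), ?_, by omega,
      by omega, ?_, ?_, ?_⟩
    · intro x hx
      simp only [Finset.mem_filter, Finset.mem_Ioc, Finset.mem_Icc] at hx ⊢
      exact ⟨hk.1.trans hx.1.1.le, hx.1.2.trans hmI.2⟩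
    · intro x hx
      simp only [hR, Finset.mem_filter, Finset.mem_Ioc, Finset.mem_Icc] at hx ⊢
      exact ⟨hk.1.trans hx.1.1.1.le, hx.1.1.2⟩
    · exact fun x hx => (Finset.mem_filter.1 hx).2
    · exact fun x hx => (Finset.mem_filter.1 (Finset.mem_filter.1 hx).1).2
    · intro x hx y hy
      refine lt_of_le_of_ne ((Finset.mem_Ioc.1 (Finset.mem_filter.1 hx).1).2.trans
        (Finset.mem_filter.1 hy).2) ?_
      rintro rfl
      exact hasymm _ _ (Finset.mem_filter.1 hx).2 (Finset.mem_filter.1 (Finset.mem_filter.1 hy).1).2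

open Classical in
/-- A vertex of backward degree `> ε n` in an interval of `n` vertices with at most
`ε ^ 2 / 32 * n ^ 2` backward edges lies in many cyclic triangles of the interval. -/
lemma cyclic_triangles_ge {N : ℕ} {T : Fin N → Fin N → Prop} (hT : IsTournament T)
    {σ : Equiv.Perm (Fin N)}
    (hσ : ∀ τ : Equiv.Perm (Fin N), backCount T σ ≤ backCount T τ) (i j k : Fin N)
    (hk : k ∈ Finset.Icc i j) (ε : ℝ) (hε : 0 < ε)
    (hback : (backIn (fun x y => T (σ x) (σ y)) (Finset.Icc i j) (fun x => ((x : ℕ) : ℤ)) : ℝ) ≤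
      ε ^ 2 / 32 * (Finset.Icc i j).card ^ 2)
    (hdeg : ε * (Finset.Icc i j).card ≤ (((Finset.Icc i j).filter
        (fun l => (l < k ∧ T (σ k) (σ l)) ∨ (k < l ∧ T (σ l) (σ k)))).card : ℝ)) :
    ε ^ 2 / 32 * (Finset.Icc i j).card ^ 2 ≤
      (((Finset.Icc i j ×ˢ Finset.Icc i j).filter (fun p => T (σ k) (σ p.1) ∧
        T (σ p.1) (σ p.2) ∧ T (σ p.2) (σ k))).card : ℝ) := by
  obtain ⟨A, hA, B, hB, hAc, hBc, hkA, hBk, hlt⟩ := exists_out_before_in hT hσ i j k hk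
  have hsub : A ×ˢ B ⊆ ((Finset.Icc i j ×ˢ Finset.Icc i j).filter (fun p => T (σ k) (σ p.1) ∧
        T (σ p.1) (σ p.2) ∧ T (σ p.2) (σ k))) ∪
      (Finset.Icc i j ×ˢ Finset.Icc i j).filter
        (fun p => ((p.1 : ℕ) : ℤ) < ((p.2 : ℕ) : ℤ) ∧ T (σ p.2) (σ p.1)) := by
    rintro ⟨x, y⟩ hp
    rw [Finset.mem_product] at hp
    have hxy := hlt x hp.1 y hp.2
    have hxy' : σ x ≠ σ y := σ.injective.ne hxy.ne
    simp only [Finset.mem_union, Finset.mem_filter, Finset.mem_product]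
    by_cases h : T (σ y) (σ x)
    · exact Or.inr ⟨⟨hA hp.1, hB hp.2⟩, by exact_mod_cast hxy, h⟩
    · exact Or.inl ⟨⟨hA hp.1, hB hp.2⟩, hkA x hp.1, (hT.2 _ _ hxy').2 h, hBk y hp.2⟩
  have h1 := (Finset.card_le_card hsub).trans (Finset.card_union_le _ _)
  rw [Finset.card_product] at h1
  change _ ≤ _ + backIn (fun x y => T (σ x) (σ y)) (Finset.Icc i j) (fun x => ((x : ℕ) : ℤ)) at h1
  have h2 : (A.card : ℝ) * B.card ≤ (((Finset.Icc i j ×ˢ Finset.Icc i j).filter (fun p =>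
      T (σ k) (σ p.1) ∧ T (σ p.1) (σ p.2) ∧ T (σ p.2) (σ k))).card : ℝ) +
      backIn (fun x y => T (σ x) (σ y)) (Finset.Icc i j) (fun x => ((x : ℕ) : ℤ)) := by
    exact_mod_cast h1
  have hA' : ε * (Finset.Icc i j).card / 4 ≤ A.card := by
    have := hdeg.trans (Nat.cast_le.2 hAc)
    push_cast at this
    linarith
  have hB' : ε * (Finset.Icc i j).card / 4 ≤ B.card := by
    have := hdeg.trans (Nat.cast_le.2 hBc)
    push_cast at this
    linarith
  have h3 := mul_le_mul hA' hB' (by positivity) (by positivity)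
  linarith

/-- **Claim.** For `t ≥ 3` and `ε > 0` there are `C₁, C₂ > 0` such that: if `T` is a
tournament with no copy of `𝒰_t` and `σ` is an ordering of its vertices minimising the
number of backward edges, then every interval of positions `[a, b]` of length at least
`C₁` contains at most `C₂` vertices incident with more than `ε·(b - a + 1)` backward edges
having both endpoints in the interval. -/
theorem statement12 (t : ℕ) (ht : 3 ≤ t) (ε : ℝ) (hε : 0 < ε) :
    ∃ C₁ C₂ : ℝ, 0 < C₁ ∧ 0 < C₂ ∧
      ∀ (N : ℕ) (T : Fin N → Fin N → Prop), IsTournament T →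
        ¬ ContainsU T t →
        ∀ σ : Equiv.Perm (Fin N),
          (∀ τ : Equiv.Perm (Fin N), backCount T σ ≤ backCount T τ) →
          ∀ a b : ℕ, a ≤ b → b < N →
            C₁ ≤ ((b - a + 1 : ℕ) : ℝ) →
            (({k : Fin N | a ≤ (k : ℕ) ∧ (k : ℕ) ≤ b ∧
                ε * ((b - a + 1 : ℕ) : ℝ) <
                  ((({l : Fin N | a ≤ (l : ℕ) ∧ (l : ℕ) ≤ b ∧
                      (((l : ℕ) < (k : ℕ) ∧ T (σ k) (σ l)) ∨
                        ((k : ℕ) < (l : ℕ) ∧ T (σ l) (σ k)))}).ncard : ℝ))}).ncard : ℝ) ≤ C₂ := by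
  classical
  obtain ⟨M₁, hM₁⟩ := exists_ranking_backIn_le t (ε ^ 2 / 64) (by positivity)
  obtain ⟨M₂, hM₂⟩ := sum_card_cyclic_lt t (ε ^ 2 / 32) (by positivity)
  refine ⟨M₁ / (ε ^ 2 / 64) + M₂ + 1, M₂ + 1, by positivity, by positivity, ?_⟩
  intro N T hT hU σ hσ a b hab hb hn
  set i : Fin N := ⟨a, by omega⟩
  set j : Fin N := ⟨b, hb⟩
  have hcard : (Finset.Icc i j).card = b - a + 1 := by
    rw [Fin.card_Icc]
    simp only [i, j]
    omega
  rw [← hcard] at hn ⊢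
  set T' : Fin N → Fin N → Prop := fun x y => T (σ x) (σ y)
  have hT' : IsTournament T' :=
    ⟨fun x => hT.1 _, fun x y hxy => hT.2 _ _ (σ.injective.ne hxy)⟩
  have hU' : ¬ ContainsU T' t := fun ⟨f, hf, h⟩ => hU ⟨σ ∘ f, σ.injective.comp hf, h⟩
  obtain ⟨r, hr, -, hback⟩ := hM₁ hT' hU' (Finset.Icc i j)
  have hn₁ : (M₁ : ℝ) ≤ ε ^ 2 / 64 * (Finset.Icc i j).card := by
    have : (M₁ : ℝ) / (ε ^ 2 / 64) ≤ (Finset.Icc i j).card := by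
      have : (0 : ℝ) ≤ M₂ := by positivity
      linarith
    rw [div_le_iff₀ (by positivity)] at this
    linarith
  have hn₂ : M₂ ≤ (Finset.Icc i j).card := by
    have h0 : (0 : ℝ) ≤ M₁ / (ε ^ 2 / 64) := by positivity
    have : (M₂ : ℝ) ≤ (Finset.Icc i j).card := by linarith
    exact_mod_cast this
  have hback' : (backIn T' (Finset.Icc i j) (fun x => ((x : ℕ) : ℤ)) : ℝ) ≤
      ε ^ 2 / 32 * (Finset.Icc i j).card ^ 2 := by
    have h1 : (backIn T' (Finset.Icc i j) (fun x => ((x : ℕ) : ℤ)) : ℝ) ≤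
        backIn T' (Finset.Icc i j) r := by
      exact_mod_cast backIn_Icc_le hσ i j r hr
    nlinarith [mul_le_mul_of_nonneg_right hn₁ (Nat.cast_nonneg (α := ℝ) (Finset.Icc i j).card)]
  let D : Fin N → Finset (Fin N) := fun k => (Finset.Icc i j).filter
    (fun l => (l < k ∧ T (σ k) (σ l)) ∨ (k < l ∧ T (σ l) (σ k)))
  set X := (Finset.Icc i j).filter (fun k => ε * (Finset.Icc i j).card ≤ ((D k).card : ℝ)) with hX
  have hsub : {k : Fin N | a ≤ (k : ℕ) ∧ (k : ℕ) ≤ b ∧ ε * ((Finset.Icc i j).card : ℝ) <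
      ((({l : Fin N | a ≤ (l : ℕ) ∧ (l : ℕ) ≤ b ∧ (((l : ℕ) < (k : ℕ) ∧ T (σ k) (σ l)) ∨
        ((k : ℕ) < (l : ℕ) ∧ T (σ l) (σ k)))}).ncard : ℝ))} ⊆ (X : Set (Fin N)) := by
    rintro k ⟨h1, h2, h3⟩
    have e : {l : Fin N | a ≤ (l : ℕ) ∧ (l : ℕ) ≤ b ∧ (((l : ℕ) < (k : ℕ) ∧ T (σ k) (σ l)) ∨
        ((k : ℕ) < (l : ℕ) ∧ T (σ l) (σ k)))} = (D k : Set (Fin N)) := by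
      ext l
      simp only [D, Set.mem_ofPred_eq, Finset.coe_filter, Finset.mem_Icc, Fin.le_def, Fin.lt_def,
        i, j, and_assoc]
    rw [e, Set.ncard_coe_finset] at h3
    exact Finset.mem_coe.2 (Finset.mem_filter.2 ⟨Finset.mem_Icc.2 ⟨h1, h2⟩, h3.le⟩)
  have h1 := Set.ncard_le_ncard hsub (Finset.finite_toSet _)
  rw [Set.ncard_coe_finset] at h1
  by_contra! hcon
  have hXM : M₂ ≤ X.card := by
    have h2 : ((M₂ + 1 : ℕ) : ℝ) < X.card := by
      push_cast
      exact hcon.trans_le (by exact_mod_cast h1)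
    have h3 : M₂ + 1 < X.card := by exact_mod_cast h2
    omega
  have h2 := hM₂ hT' hU' X (Finset.Icc i j) (Finset.Icc i j) hXM hn₂ hn₂
  have h3 := Finset.card_nsmul_le_sum X _ _ fun k hk =>
    cyclic_triangles_ge hT hσ i j k (Finset.mem_filter.1 hk).1 ε hε hback' (Finset.mem_filter.1 hk).2
  rw [nsmul_eq_mul] at h3
  linarith
end

section
/- There exist arbitrarily large n for which there is a tournament on n vertices that contains no copy of the unavoidable 2-tournament 𝒰₂ and is (log n)/(5n)-far from being transitive; that is, every linear ordering of its vertex set has at least n·(log n)/5 backward edges (log denoting the natural logarithm). -/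
/-- The double of `T`: a copy of `T` followed by a reversed copy of `T`, with all edges from
the first copy to the second except that the edges between the two copies of a vertex are
reversed. -/
def doubleTournament {V : Type*} (T : V → V → Prop) : V ⊕ V → V ⊕ V → Prop
  | .inl x, .inl y => T x y
  | .inr x, .inr y => T y x
  | .inl x, .inr y => x ≠ y
  | .inr x, .inl y => x = y

/-- `T` contains the blow-up of a cyclic triangle with two vertices in each class. -/
def HasBlowup {V : Type*} (T : V → V → Prop) : Prop :=
  ∃ a a' b b' c c' : V, a ≠ a' ∧ b ≠ b' ∧ c ≠ c' ∧
    (T a b ∧ T a b' ∧ T a' b ∧ T a' b') ∧ (T b c ∧ T b c' ∧ T b' c ∧ T b' c') ∧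
    (T c a ∧ T c a' ∧ T c' a ∧ T c' a')

open Classical in
/-- The number of backward edges of `T` with respect to the ranking `r`. -/
noncomputable def rankBackCount {V : Type*} [Fintype V] (T : V → V → Prop) (r : V → ℤ) : ℕ :=
  ∑ u, ∑ v, if r u < r v ∧ T v u then 1 else 0

theorem HasBlowup.of_containsU {V : Type*} {T : V → V → Prop} (h : ContainsU T 2) :
    HasBlowup T := by
  obtain ⟨f, hf, h⟩ := h
  have hne (i : Fin 3) : f (i, 0) ≠ f (i, 1) := fun h' => by
    have := hf h'
    simp at this
  have hedge (i j : Fin 3) (s t : Fin 2) (hij : j = i + 1) : T (f (i, s)) (f (j, t)) :=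
    h _ _ (Or.inr hij)
  refine ⟨f (0, 0), f (0, 1), f (1, 0), f (1, 1), f (2, 0), f (2, 1), hne 0, hne 1, hne 2,
    ⟨?_, ?_, ?_, ?_⟩, ⟨?_, ?_, ?_, ?_⟩, ⟨?_, ?_, ?_, ?_⟩⟩ <;> exact hedge _ _ _ _ rfl

theorem HasBlowup.flip {V : Type*} {T : V → V → Prop} (h : HasBlowup fun x y => T y x) :
    HasBlowup T := by
  obtain ⟨a, a', b, b', c, c', ha, hb, hc, hab, hbc, hca⟩ := h
  exact ⟨a, a', c, c', b, b', ha, hc, hb, by tauto, by tauto, by tauto⟩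

theorem IsTournament.double {V : Type*} {T : V → V → Prop} (hT : IsTournament T) :
    IsTournament (doubleTournament T) := by
  obtain ⟨hirr, htot⟩ := hT
  constructor
  · rintro (x | x) <;> exact hirr x
  · rintro (x | x) (y | y) hxy <;> simp only [doubleTournament]
    · exact htot x y (by simpa using hxy)
    · tauto
    · tauto
    · exact htot y x (by simpa [eq_comm] using hxy)

theorem not_hasBlowup_double {V : Type*} {T : V → V → Prop} (hT : IsTournament T)
    (h : ¬ HasBlowup T) : ¬ HasBlowup (doubleTournament T) := by
  have hasymm (x y : V) (hxy : T x y) (hyx : T y x) : False := by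
    have hne : x ≠ y := fun e => hT.1 x (by rwa [← e] at hxy)
    exact (hT.2 x y hne).1 hxy hyx
  rintro ⟨a | a, a' | a', b | b, b' | b', c | c, c' | c', ha, hb, hc, hab, hbc, hca⟩ <;>
    simp only [doubleTournament, ne_eq, Sum.inl.injEq, Sum.inr.injEq] at ha hb hc hab hbc hca <;>
    first
    | exact h ⟨a, a', b, b', c, c', ha, hb, hc, hab, hbc, hca⟩
    | exact h (HasBlowup.flip ⟨a, a', b, b', c, c', ha, hb, hc, hab, hbc, hca⟩)
    | grind

open Classical in
theorem card_le_crossing {V : Type*} [Fintype V] (p q : V → ℤ) (hpq : ∀ x, p x ≠ q x) :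
    Fintype.card V ≤ (∑ x, ∑ y, if p x < q y ∧ y = x then 1 else 0) +
      (∑ x, ∑ y, if q x < p y ∧ y ≠ x then 1 else 0) + 1 := by
  set K : Finset V := Finset.univ.filter fun x => q x < p x with hK
  have h1 : (∑ x, ∑ y, if p x < q y ∧ y = x then 1 else 0) = Kᶜ.card := by
    rw [hK, Finset.compl_filter, Finset.card_filter]
    refine Finset.sum_congr rfl fun x _ => ?_
    rw [Finset.sum_eq_single x (by intro y _ hy; simp [hy]) (by simp)]
    have := hpq x
    simp only [and_true]
    congr 1
    apply propext
    omega
  have h2 : K.card ≤ (∑ x, ∑ y, if q x < p y ∧ y ≠ x then 1 else 0) + 1 := by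
    rcases K.eq_empty_or_nonempty with hKe | hKn
    · simp [hKe]
    · obtain ⟨x₀, hx₀, hmin⟩ := K.exists_min_image q hKn
      have h3 : (∑ y, if q x₀ < p y ∧ y ≠ x₀ then 1 else 0) ≤
          ∑ x, ∑ y, if q x < p y ∧ y ≠ x then 1 else 0 :=
        Finset.single_le_sum (f := fun x => ∑ y, if q x < p y ∧ y ≠ x then 1 else 0)
          (fun _ _ => Nat.zero_le _) (Finset.mem_univ x₀)
      rw [← Finset.card_filter] at h3
      have h4 : (K.erase x₀).card ≤
          (Finset.univ.filter fun y => q x₀ < p y ∧ y ≠ x₀).card := by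
        refine Finset.card_le_card fun y hy => ?_
        obtain ⟨hne, hy⟩ := Finset.mem_erase.1 hy
        have hyK : q y < p y := by simpa [hK] using hy
        simpa [hne] using (hmin y hy).trans_lt hyK
      have h5 := Finset.card_erase_add_one hx₀
      omega
  have h6 := Finset.card_add_card_compl K
  omega

theorem rankBackCount_flip {V : Type*} [Fintype V] (T : V → V → Prop) (r : V → ℤ) :
    rankBackCount (fun x y => T y x) r = rankBackCount T fun x => -r x := by
  classical
  unfold rankBackCount
  rw [Finset.sum_comm]
  simp

theorem rankBackCount_double {V : Type*} [Fintype V] (T : V → V → Prop) (r : V ⊕ V → ℤ)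
    (hr : Function.Injective r) :
    rankBackCount T (fun x => r (.inl x)) + rankBackCount T (fun x => -r (.inr x)) +
      Fintype.card V ≤ rankBackCount (doubleTournament T) r + 1 := by
  classical
  have h := card_le_crossing (fun x => r (.inl x)) (fun x => r (.inr x))
    (fun x e => by simpa using hr e)
  rw [← rankBackCount_flip]
  have hsum : rankBackCount (doubleTournament T) r =
      rankBackCount T (fun x => r (.inl x)) +
        (∑ x, ∑ y, if r (.inr x) < r (.inl y) ∧ y ≠ x then 1 else 0) +
        ((∑ x, ∑ y, if r (.inl x) < r (.inr y) ∧ y = x then 1 else 0) +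
        rankBackCount (fun x y => T y x) fun x => r (.inr x)) := by
    simp only [rankBackCount, Fintype.sum_sum_type, Finset.sum_add_distrib]
    congr!
  omega

theorem exists_tournament_two_pow (d : ℕ) :
    ∃ (V : Type) (_ : Fintype V) (T : V → V → Prop), Fintype.card V = 2 ^ d ∧
      IsTournament T ∧ ¬ HasBlowup T ∧ ∀ r : V → ℤ, Function.Injective r →
        2 ^ d * d + 2 ≤ 2 * rankBackCount T r + 2 * 2 ^ d := by
  induction d with
  | zero =>
    refine ⟨Unit, inferInstance, fun _ _ => False, by simp, ⟨by simp, by simp⟩, ?_, by simp⟩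
    rintro ⟨a, a', -, -, -, -, ha, -⟩
    exact ha rfl
  | succ d ih =>
    obtain ⟨V, _, T, hcard, hT, hfree, hback⟩ := ih
    refine ⟨V ⊕ V, inferInstance, doubleTournament T, ?_, hT.double,
      not_hasBlowup_double hT hfree, fun r hr => ?_⟩
    · rw [Fintype.card_sum, hcard]
      ring
    · have h1 := hback (fun x => r (.inl x)) (hr.comp Sum.inl_injective)
      have h2 := hback (fun x => -r (.inr x))
        (neg_injective.comp (hr.comp Sum.inr_injective))
      have h3 := rankBackCount_double T r hr
      rw [hcard] at h3
      have h4 : 2 ^ (d + 1) * (d + 1) = 2 * (2 ^ d * d) + 2 * 2 ^ d := by ring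
      rw [h4, pow_succ]
      omega

theorem rankBackCount_eq_backCount {n : ℕ} {V : Type*} [Fintype V] (T : V → V → Prop)
    (σ : Fin n ≃ V) : rankBackCount T (fun v => ((σ.symm v : ℕ) : ℤ)) = backCount T σ := by
  classical
  rw [rankBackCount, backCount, Set.ncard_eq_toFinset_card', Set.toFinset_ofPred,
    Finset.card_filter, Fintype.sum_prod_type, ← Equiv.sum_comp σ]
  refine Finset.sum_congr rfl fun i _ => ?_
  rw [← Equiv.sum_comp σ]
  simp

/-- **Claim (lower bound for `𝒟(2, δ)`).** There exist arbitrarily large `n` for which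
there is an `n`-vertex tournament with no copy of `𝒰₂` in which every ordering of the
vertex set has at least `n·log n / 5` backward edges. -/
theorem statement17 :
    ∀ n₀ : ℕ, ∃ n : ℕ, n₀ ≤ n ∧
      ∃ T : Fin n → Fin n → Prop, IsTournament T ∧ ¬ ContainsU T 2 ∧
        ∀ σ : Equiv.Perm (Fin n),
          (n : ℝ) * Real.log (n : ℝ) / 5 ≤ (backCount T σ : ℝ) := by
  intro n₀
  obtain ⟨d, hd, hd3⟩ : ∃ d, n₀ ≤ d ∧ 3 ≤ d := ⟨max n₀ 3, le_max_left _ _, le_max_right _ _⟩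
  obtain ⟨V, _, T, hcard, hT, hfree, hback⟩ := exists_tournament_two_pow d
  let e : Fin (2 ^ d) ≃ V := (Fintype.equivFinOfCardEq hcard).symm
  refine ⟨2 ^ d, hd.trans Nat.lt_two_pow_self.le, fun i j => T (e i) (e j),
    ⟨fun i => hT.1 _, fun i j hij => hT.2 _ _ (e.injective.ne hij)⟩, ?_, fun σ => ?_⟩
  · rintro ⟨f, hf, h⟩
    exact hfree (.of_containsU ⟨e ∘ f, e.injective.comp hf, h⟩)
  · have h := hback (fun v => (((σ.trans e).symm v : ℕ) : ℤ))
      ((Nat.cast_injective.comp Fin.val_injective).comp (σ.trans e).symm.injective)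
    rw [rankBackCount_eq_backCount] at h
    change _ ≤ ((backCount T (σ.trans e) : ℕ) : ℝ)
    have h' : (2 : ℝ) ^ d * d + 2 ≤ 2 * (backCount T (σ.trans e) : ℝ) + 2 * 2 ^ d := by
      exact_mod_cast h
    have hlog : Real.log 2 ≤ 5 / 6 := by linarith [Real.log_two_lt_d9]
    have hd3' : (3 : ℝ) ≤ d := by exact_mod_cast hd3
    have hpow : (0 : ℝ) < 2 ^ d := by positivity
    have hbound : (2 : ℝ) ^ d * (d * Real.log 2) ≤ 2 ^ d * (5 / 2 * d - 5) := by
      refine mul_le_mul_of_nonneg_left ?_ hpow.le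
      nlinarith
    push_cast
    rw [Real.log_pow]
    linarith
end

section
/- There exists an absolute constant C > 0 such that every tournament on n ≥ 2 vertices that is C(log n)²/n-far from being transitive — that is, every linear ordering of its vertex set has at least C·n·(log n)² backward edges — contains a copy of the unavoidable 2-tournament 𝒰₂. -/
open Finset

section Tournaments

open scoped Classical

namespace IsTournament

variable {V : Type*} {T : V → V → Prop}

lemma ne (hT : IsTournament T) {x y : V} (h : T x y) : x ≠ y := by
  rintro rfl
  exact hT.1 x h

lemma asymm (hT : IsTournament T) {x y : V} (h : T x y) : ¬ T y x :=
  (hT.2 x y (hT.ne h)).1 h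

lemma of_not (hT : IsTournament T) {x y : V} (hxy : x ≠ y) (h : ¬ T x y) : T y x :=
  (hT.2 y x hxy.symm).2 h

lemma containsU_two_of_ordered (hT : IsTournament T) {a a' b b' c c' : V}
    (haa : T a a') (hbb : T b b') (hcc : T c c')
    (h₁ : T a b) (h₂ : T a b') (h₃ : T a' b) (h₄ : T a' b')
    (h₅ : T b c) (h₆ : T b c') (h₇ : T b' c) (h₈ : T b' c')
    (h₉ : T c a) (h₁₀ : T c a') (h₁₁ : T c' a) (h₁₂ : T c' a') : ContainsU T 2 := by
  let f : Fin 3 × Fin 2 → V := fun p => (![![a, a'], ![b, b'], ![c, c']] p.1) p.2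
  have hf : ∀ p q, UPat 2 p q → T (f p) (f q) := by
    rintro ⟨i, x⟩ ⟨j, y⟩
    fin_cases i <;> fin_cases j <;> fin_cases x <;> fin_cases y <;> simp [UPat, f] <;> assumption
  refine ⟨f, fun p q hpq => ?_, hf⟩
  by_contra hne
  have : UPat 2 p q ∨ UPat 2 q p := by
    revert hne
    clear hpq
    revert p q
    unfold UPat
    decide
  rcases this with h | h
  · exact hT.ne (hf _ _ h) hpq
  · exact hT.ne (hf _ _ h) hpq.symm

/-- Since the classes of `𝒰₂` have order two, it suffices to find the edges between classes. -/
lemma containsU_two (hT : IsTournament T) {a a' b b' c c' : V}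
    (haa : a ≠ a') (hbb : b ≠ b') (hcc : c ≠ c')
    (h₁ : T a b) (h₂ : T a b') (h₃ : T a' b) (h₄ : T a' b')
    (h₅ : T b c) (h₆ : T b c') (h₇ : T b' c) (h₈ : T b' c')
    (h₉ : T c a) (h₁₀ : T c a') (h₁₁ : T c' a) (h₁₂ : T c' a') : ContainsU T 2 := by
  have total : ∀ {x y : V}, x ≠ y → T x y ∨ T y x := fun {x y} hxy =>
    or_iff_not_imp_left.2 fun h => hT.of_not hxy h
  rcases total haa with h | h <;> rcases total hbb with h' | h' <;>
    rcases total hcc with h'' | h'' <;>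
    apply hT.containsU_two_of_ordered h h' h'' <;> assumption

lemma two_mul_card_pairs (hT : IsTournament T) (A : Finset V) :
    2 * #{p ∈ A ×ˢ A | T p.1 p.2} = #A * (#A - 1) := by
  have h₁ : #{p ∈ A ×ˢ A | T p.2 p.1} = #{p ∈ A ×ˢ A | T p.1 p.2} := by
    refine card_bij (fun p _ => p.swap) ?_ ?_ ?_
    · simp +contextual
    · simp
    · rintro ⟨x, y⟩ h
      exact ⟨(y, x), by simpa [and_comm] using h, rfl⟩
  have h₂ : {p ∈ A ×ˢ A | T p.1 p.2} ∪ {p ∈ A ×ˢ A | T p.2 p.1} = A.offDiag := by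
    ext ⟨x, y⟩
    simp only [mem_union, mem_filter, mem_product, mem_offDiag]
    constructor
    · rintro (⟨⟨hx, hy⟩, h⟩ | ⟨⟨hx, hy⟩, h⟩)
      · exact ⟨hx, hy, hT.ne h⟩
      · exact ⟨hx, hy, (hT.ne h).symm⟩
    · rintro ⟨hx, hy, h⟩
      by_cases hxy : T x y
      · exact .inl ⟨⟨hx, hy⟩, hxy⟩
      · exact .inr ⟨⟨hx, hy⟩, hT.of_not h hxy⟩
  have h₃ : Disjoint {p ∈ A ×ˢ A | T p.1 p.2} {p ∈ A ×ˢ A | T p.2 p.1} := by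
    rw [disjoint_filter]
    exact fun p _ h => hT.asymm h
  rw [Nat.mul_sub_one, ← offDiag_card, ← h₂, card_union_of_disjoint h₃, h₁, two_mul]

end IsTournament

/-- Sufficiently many dense subsets of a finite set include two with a dense intersection. -/
lemma exists_ne_card_inter_ge {ι Ω : Type*} [DecidableEq ι] [DecidableEq Ω]
    {P : Finset ι} {U : Finset Ω} {S : ι → Finset Ω}
    {K : ℕ} (hK : 0 < K) (hU : U.Nonempty) (hP : 2 * K ≤ #P) (hSU : ∀ i ∈ P, S i ⊆ U)
    (hS : ∀ i ∈ P, #U ≤ K * #(S i)) :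
    ∃ i ∈ P, ∃ j ∈ P, i ≠ j ∧ #U ≤ (2 * K) ^ 2 * #(S i ∩ S j) := by
  obtain ⟨R, hRP, hR⟩ := exists_subset_card_eq hP
  by_contra! hcon
  have h₁ : ∑ i ∈ R, #(S i) = ∑ x ∈ U, #{i ∈ R | x ∈ S i} := by
    have := sum_card_bipartiteAbove_eq_sum_card_bipartiteBelow (s := R) (t := U)
      (fun i x => x ∈ S i)
    simp only [bipartiteAbove, bipartiteBelow] at this
    rw [← this]
    refine sum_congr rfl fun i hi => ?_
    rw [filter_mem_eq_inter, inter_eq_right.2 (hSU i (hRP hi))]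
  have h₂ : ∑ p ∈ R.offDiag, #(S p.1 ∩ S p.2)
      = ∑ x ∈ U, #{p ∈ R.offDiag | x ∈ S p.1 ∩ S p.2} := by
    have := sum_card_bipartiteAbove_eq_sum_card_bipartiteBelow (s := R.offDiag) (t := U)
      (fun p x => x ∈ S p.1 ∩ S p.2)
    simp only [bipartiteAbove, bipartiteBelow] at this
    rw [← this]
    refine sum_congr rfl fun p hp => ?_
    have hp' : S p.1 ∩ S p.2 ⊆ U := inter_subset_left.trans (hSU _ (hRP (mem_offDiag.1 hp).1))
    rw [filter_mem_eq_inter, inter_eq_right.2 hp']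
  have h₃ : ∀ x ∈ U, #{i ∈ R | x ∈ S i} ≤ 1 + #{p ∈ R.offDiag | x ∈ S p.1 ∩ S p.2} := by
    intro x _
    have : {p ∈ R.offDiag | x ∈ S p.1 ∩ S p.2} = ({i ∈ R | x ∈ S i} : Finset ι).offDiag := by
      ext ⟨i, j⟩
      simp only [mem_filter, mem_offDiag, mem_inter]
      tauto
    rw [this, offDiag_card]
    generalize #{i ∈ R | x ∈ S i} = d
    rcases d with _ | _ | d
    · simp
    · simp
    · have : (d + 1 + 1) * (d + 1 + 1) = (d + 1 + 1) + (d + 1 + 1) * (d + 1) := by ring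
      rw [this, Nat.add_sub_cancel_left]
      nlinarith
  have h₄ : ∑ i ∈ R, #(S i) ≤ #U + ∑ p ∈ R.offDiag, #(S p.1 ∩ S p.2) := by
    rw [h₁, h₂]
    refine (sum_le_sum h₃).trans ?_
    rw [sum_add_distrib]
    simp
  have h₅ : 2 * #U ≤ ∑ i ∈ R, #(S i) := by
    have : ∑ i ∈ R, #U ≤ ∑ i ∈ R, K * #(S i) := sum_le_sum fun i hi => hS i (hRP hi)
    rw [sum_const, smul_eq_mul, hR, ← mul_sum] at this
    nlinarith
  have h₆ : (2 * K) ^ 2 * ∑ p ∈ R.offDiag, #(S p.1 ∩ S p.2) ≤ #R.offDiag * #U := by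
    rw [mul_sum, ← smul_eq_mul (#R.offDiag), ← sum_const]
    refine sum_le_sum fun p hp => ?_
    obtain ⟨h, h', hne⟩ := mem_offDiag.1 hp
    exact (hcon _ (hRP h) _ (hRP h') hne).le
  have h₇ : #R.offDiag + 2 * K = (2 * K) ^ 2 := by
    rw [offDiag_card, hR, sq]
    exact Nat.sub_add_cancel (Nat.le_mul_self _)
  have hU' : 0 < #U := hU.card_pos
  nlinarith [mul_pos hK hU']

/-- The pairs in `W` that form a directed triangle together with `v`. -/
noncomputable def trianglePairs {V : Type*} (T : V → V → Prop) (W : Finset V) (v : V) :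
    Finset (V × V) :=
  {p ∈ W ×ˢ W | T p.1 v ∧ T v p.2 ∧ T p.2 p.1}

/-- The edges inside `W` that go backward with respect to the ranking `r`. -/
noncomputable def backPairs {V α : Type*} [LinearOrder α] (T : V → V → Prop) (W : Finset V)
    (r : V → α) : Finset (V × V) :=
  {p ∈ W ×ˢ W | r p.1 < r p.2 ∧ T p.2 p.1}

namespace IsTournament

variable {V : Type*} {T : V → V → Prop}

/-- A `𝒰₂`-free tournament has boundedly many vertices lying in a positive proportion of
the possible directed triangles. -/
lemma containsU_two_of_trianglePairs (hT : IsTournament T) {K : ℕ} (hK : 0 < K) {W P : Finset V}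
    (hW : 256 * K ^ 4 < #W) (hP : 2 * K ≤ #P)
    (h : ∀ v ∈ P, #W ^ 2 ≤ K * #(trianglePairs T W v)) : ContainsU T 2 := by
  have hWne : W.Nonempty := card_pos.1 (by lia)
  obtain ⟨v, hv, v', hv', hvv, hE⟩ := exists_ne_card_inter_ge
    (U := W ×ˢ W) (S := trianglePairs T W) hK
    (hWne.product hWne) hP (fun v _ => filter_subset _ _)
    (fun v hv => by rw [card_product, ← sq]; exact h v hv)
  set E := trianglePairs T W v ∩ trianglePairs T W v'
  have hEW : E ⊆ W ×ˢ W := inter_subset_left.trans (filter_subset _ _)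
  let B : V → Finset V := fun a => {b ∈ W | (a, b) ∈ E}
  have hEsum : #E = ∑ a ∈ W, #(B a) := by
    rw [card_eq_sum_card_fiberwise (f := Prod.fst) (t := W)
      (fun p hp => (mem_product.1 (hEW hp)).1)]
    refine sum_congr rfl fun a ha => ?_
    refine card_bij (fun p _ => p.2) ?_ ?_ ?_
    · rintro ⟨x, y⟩ hp
      obtain ⟨hp', rfl⟩ := mem_filter.1 hp
      exact mem_filter.2 ⟨(mem_product.1 (hEW hp')).2, hp'⟩
    · rintro ⟨x, y⟩ hp ⟨x', y'⟩ hp' hyy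
      have h₁ := (mem_filter.1 hp).2
      have h₂ := (mem_filter.1 hp').2
      simp_all
    · intro b hb
      exact ⟨(a, b), mem_filter.2 ⟨(mem_filter.1 hb).2, rfl⟩, rfl⟩
  set L := (2 * K) ^ 2 with hL
  have hLK : L = 4 * K ^ 2 := by rw [hL]; ring
  have hL0 : 0 < L := by positivity
  have hWL : 16 * L ^ 2 < #W := by
    calc 16 * L ^ 2 = 256 * K ^ 4 := by rw [hLK]; ring
      _ < #W := hW
  let Q := {a ∈ W | #W ≤ 2 * L * #(B a)}
  have hQW : Q ⊆ W := filter_subset _ _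
  have hQ : 2 * (2 * L) ≤ #Q := by
    have h₁ : ∀ a ∈ W, 2 * L * #(B a) ≤ #W + if a ∈ Q then 2 * L * #W else 0 := by
      intro a ha
      split_ifs with haQ
      · have : #(B a) ≤ #W := card_le_card (filter_subset _ _)
        nlinarith
      · have : ¬ #W ≤ 2 * L * #(B a) := fun h' => haQ (mem_filter.2 ⟨ha, h'⟩)
        lia
    have h₂ := sum_le_sum h₁
    rw [← mul_sum, ← hEsum, sum_add_distrib, sum_const, smul_eq_mul, ← sum_filter, sum_const,
      smul_eq_mul, filter_mem_eq_inter, inter_eq_right.2 hQW] at h₂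
    rw [card_product] at hE
    have h₃ : #W * #W ≤ #W * (#Q * (2 * L)) := by nlinarith
    have h₄ := Nat.le_of_mul_le_mul_left h₃ hWne.card_pos
    by_contra! h₅
    nlinarith
  obtain ⟨a, ha, a', ha', haa, hI⟩ := exists_ne_card_inter_ge (U := W) (S := B)
    (by positivity : 0 < 2 * L) hWne hQ (fun a _ => filter_subset _ _)
    (fun a ha => (mem_filter.1 ha).2)
  have h2 : 1 < #(B a ∩ B a') := by
    by_contra! h₅
    nlinarith
  obtain ⟨b, hb, b', hb', hbb⟩ := one_lt_card.1 h2
  simp only [B, E, trianglePairs, mem_inter, mem_filter, mem_product] at hb hb'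
  apply hT.containsU_two hvv hbb haa <;> tauto

/-- All but few vertices of a tournament have many out-neighbours and many in-neighbours. -/
lemma card_filter_outdegree_lt (hT : IsTournament T) (W : Finset V) (d : ℕ) :
    #{v ∈ W | #{w ∈ W | T v w} < d} ≤ 2 * d := by
  set S := {v ∈ W | #{w ∈ W | T v w} < d} with hS
  have h₁ := hT.two_mul_card_pairs S
  have h₂ : #{p ∈ S ×ˢ S | T p.1 p.2} = ∑ v ∈ S, #{w ∈ S | T v w} := by
    rw [card_filter, sum_product]
    simp only [card_filter]
  have h₃ : ∑ v ∈ S, #{w ∈ S | T v w} ≤ ∑ v ∈ S, d := by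
    refine sum_le_sum fun v hv => ?_
    refine (card_le_card (filter_subset_filter _ (filter_subset _ _))).trans ?_
    exact (mem_filter.1 hv).2.le
  have h₄ : ∑ v ∈ S, #{w ∈ S | T v w} + #S ≤ ∑ v ∈ S, d := by
    rw [card_eq_sum_ones S, ← sum_add_distrib]
    refine sum_le_sum fun v hv => ?_
    refine Nat.succ_le_of_lt (lt_of_le_of_lt ?_ (mem_filter.1 hv).2)
    exact card_le_card (filter_subset_filter _ (filter_subset _ _))
  rw [sum_const, smul_eq_mul] at h₄
  by_contra! hlt
  have : #S * (#S - 1) ≤ #S * (2 * d) := by nlinarith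
  have := Nat.le_of_mul_le_mul_left this (by lia)
  have h₅ : #S - 1 = 2 * d := by lia
  rw [h₅] at h₁
  nlinarith

lemma flip (hT : IsTournament T) : IsTournament (fun x y => T y x) :=
  ⟨hT.1, fun x y hxy => hT.2 y x hxy.symm⟩

/-- A `𝒰₂`-free tournament has an ordering with few backward edges. -/
lemma exists_ranking (Q : ℕ) : ∃ M : ℕ, ∀ {V : Type} {T : V → V → Prop}, IsTournament T →
    ¬ ContainsU T 2 → ∀ W : Finset V, ∃ r : V → ℕ, Set.InjOn r W ∧ (∀ x ∈ W, r x < #W) ∧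
      Q * #(backPairs T W r) ≤ #W ^ 2 + M * #W := by
  set K := 32 * Q + 1 with hK
  set N := 256 * K ^ 4 + 8 * K + 64 with hN
  refine ⟨Q * N, fun {V T} hT hU W => ?_⟩
  induction hw : #W using Nat.strong_induction_on generalizing W with
  | _ w ih =>
  rcases le_or_gt w N with hwN | hwN
  · have e := W.equivFin
    refine ⟨fun x => if hx : x ∈ W then W.equivFin ⟨x, hx⟩ else 0, ?_, ?_, ?_⟩
    · intro x hx y hy hxy
      rw [mem_coe] at hx hy
      simp only [hx, hy, dif_pos] at hxy
      have := W.equivFin.injective (Fin.ext hxy)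
      simpa using this
    · intro x hx
      simp [hx, ← hw]
    · have : ∀ r : V → ℕ, #(backPairs T W r) ≤ w * w := fun r => by
        rw [← hw, ← card_product]
        exact card_le_card (filter_subset _ _)
      refine (Nat.mul_le_mul_left _ (this _)).trans ?_
      have : Q * (w * w) ≤ Q * (N * w) := Nat.mul_le_mul_left _ (Nat.mul_le_mul_right _ hwN)
      nlinarith
  · set d := w / 8 with hd
    have hbad : #{v ∈ W | w ^ 2 ≤ K * #(trianglePairs T W v)} < 2 * K := by
      by_contra! hcon
      refine hU (hT.containsU_two_of_trianglePairs (W := W) (by lia) (by lia) hcon fun v hv => ?_)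
      rw [hw]
      exact (mem_filter.1 hv).2
    have hout := hT.card_filter_outdegree_lt W d
    have hin := hT.flip.card_filter_outdegree_lt W d
    obtain ⟨v, hvW, hv⟩ : ∃ v ∈ W, v ∉ {v ∈ W | w ^ 2 ≤ K * #(trianglePairs T W v)} ∪
        ({v ∈ W | #{w ∈ W | T v w} < d} ∪ {v ∈ W | #{w ∈ W | T w v} < d}) := by
      refine exists_mem_notMem_of_card_lt_card ?_
      refine (card_union_le _ _).trans_lt ((Nat.add_le_add_left (card_union_le _ _) _).trans_lt ?_)
      lia
    simp only [mem_union, mem_filter, hvW, true_and, not_or, not_le, not_lt] at hv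
    obtain ⟨hv₁, hv₂, hv₃⟩ := hv
    set A := {w ∈ W | T w v} with hA
    set B := {w ∈ W | T v w} with hB
    have hvA : v ∉ A := fun h => hT.1 v (mem_filter.1 h).2
    have hvB : v ∉ B := fun h => hT.1 v (mem_filter.1 h).2
    have hAB : Disjoint A B := disjoint_filter.2 fun x _ h => hT.asymm h
    have hWAB : ∀ x ∈ W, x ∈ A ∨ x = v ∨ x ∈ B := by
      intro x hx
      by_cases hxv : x = v
      · exact .inr (.inl hxv)
      · by_cases h : T x v
        · exact .inl (mem_filter.2 ⟨hx, h⟩)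
        · exact .inr (.inr (mem_filter.2 ⟨hx, hT.of_not hxv h⟩))
    have hcard : #A + #B + 1 = w := by
      have : insert v (A ∪ B) = W := by
        ext x
        simp only [mem_insert, mem_union]
        refine ⟨?_, fun hx => by have := hWAB x hx; tauto⟩
        rintro (rfl | hx | hx)
        · exact hvW
        · exact (mem_filter.1 hx).1
        · exact (mem_filter.1 hx).1
      rw [← hw, ← this, card_insert_of_notMem (by simp [hvA, hvB]), card_union_of_disjoint hAB]
    obtain ⟨r₁, hr₁, hr₁', hc₁⟩ := ih _ (by lia) A rfl
    obtain ⟨r₂, hr₂, hr₂', hc₂⟩ := ih _ (by lia) B rfl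
    let r : V → ℕ := fun x => if x ∈ A then r₁ x else if x = v then #A else #A + 1 + r₂ x
    have rA : ∀ x ∈ A, r x = r₁ x := fun x hx => if_pos hx
    have rv : r v = #A := by simp [r, hvA]
    have rB : ∀ x ∈ B, r x = #A + 1 + r₂ x := by
      intro x hx
      have h₁ : x ∉ A := fun h => (disjoint_left.1 hAB h) hx
      have h₂ : x ≠ v := fun h => hvB (h ▸ hx)
      simp [r, h₁, h₂]
    have hback : backPairs T W r ⊆
        trianglePairs T W v ∪ (backPairs T A r₁ ∪ backPairs T B r₂) := by
      rintro ⟨x, y⟩ hxy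
      simp only [backPairs, mem_filter, mem_product] at hxy
      obtain ⟨⟨hx, hy⟩, hlt, hxy⟩ := hxy
      simp only [mem_union, trianglePairs, backPairs, mem_filter, mem_product, hx, hy]
      rcases hWAB x hx with h | rfl | h <;> rcases hWAB y hy with h' | rfl | h'
      · rw [rA x h, rA y h'] at hlt
        tauto
      · exact absurd hxy (hT.asymm (mem_filter.1 h).2)
      · exact .inl ⟨⟨trivial, trivial⟩, (mem_filter.1 h).2, (mem_filter.1 h').2, hxy⟩
      · have := hr₁' y h'
        rw [rA y h'] at hlt; lia
      · lia
      · exact absurd hxy (hT.asymm (mem_filter.1 h').2)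
      · have := hr₁' y h'
        rw [rA y h', rB x h] at hlt; lia
      · rw [rB x h] at hlt; lia
      · rw [rB x h, rB y h'] at hlt
        have : r₂ x < r₂ y := by lia
        tauto
    refine ⟨r, ?_, ?_, ?_⟩
    · intro x hx y hy hxy
      rcases hWAB x hx with h | rfl | h <;> rcases hWAB y hy with h' | rfl | h'
      · exact hr₁ h h' (by rw [← rA x h, ← rA y h', hxy])
      · have := hr₁' x h
        rw [rA x h] at hxy; lia
      · have := hr₁' x h
        rw [rA x h, rB y h'] at hxy; lia
      · have := hr₁' y h'
        rw [rA y h'] at hxy; lia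
      · rfl
      · rw [rB y h'] at hxy; lia
      · have := hr₁' y h'
        rw [rA y h', rB x h] at hxy; lia
      · rw [rB x h] at hxy; lia
      · refine hr₂ h h' ?_
        rw [rB x h, rB y h'] at hxy; lia
    · intro x hx
      rcases hWAB x hx with h | rfl | h
      · have := hr₁' x h
        rw [rA x h]; lia
      · lia
      · have := hr₂' x h
        rw [rB x h]; lia
    · have h₁ := (card_le_card hback).trans
        ((card_union_le _ _).trans (Nat.add_le_add_left (card_union_le _ _) _))
      have h₂ : 32 * (Q * #(trianglePairs T W v)) ≤ w ^ 2 := by nlinarith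
      have h₃ : w ^ 2 ≤ 32 * (#A * #B) := by
        have hw9 : w ≤ 9 * d := by lia
        have hd3 : 3 * (d * d) ≤ #A * #B := by
          rcases le_total (#A) (#B) with hle | hle
          · have := Nat.mul_le_mul hv₃ (show 3 * d ≤ #B by lia)
            linarith
          · have := Nat.mul_le_mul (show 3 * d ≤ #A by lia) hv₂
            linarith
        have := Nat.mul_le_mul hw9 hw9
        have := Nat.zero_le (#A * #B)
        rw [sq]
        linarith
      have h₄ : w ^ 2 + 1 = #A ^ 2 + #B ^ 2 + 2 * (#A * #B) + 2 * w := by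
        rw [← hcard]; ring
      have h₆ : Q * N * w = Q * N * #A + Q * N * #B + Q * N := by
        rw [← hcard]; ring
      have h₅ := Nat.mul_le_mul_left Q h₁
      rw [mul_add, mul_add] at h₅
      have h₇ : 1 ≤ w := by lia
      have h₈ := Nat.zero_le (Q * N)
      have h₉ := Nat.zero_le (#A * #B)
      linarith

end IsTournament

/-- The vertex `v` has many out-neighbours among the `4 * s` vertices to its left. -/
def LeftHeavy (T : ℤ → ℤ → Prop) (s : ℕ) (v : ℤ) : Prop :=
  s < 8 * #{z ∈ Ico (v - 4 * s) v | T v z}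

/-- The vertex `v` has many in-neighbours among the `4 * s` vertices to its right. -/
def RightHeavy (T : ℤ → ℤ → Prop) (s : ℕ) (v : ℤ) : Prop :=
  s < 8 * #{z ∈ Ioc v (v + 4 * s) | T z v}

/-- The properties of a `𝒰₂`-free tournament whose natural ordering minimises the number of
backward edges. -/
structure IsMedianOrder (M : ℕ) (T : ℤ → ℤ → Prop) : Prop where
  isTournament : IsTournament T
  free : ¬ ContainsU T 2
  right : ∀ v w, #{z ∈ Ioc v w | T z v} ≤ #{z ∈ Ioc v w | T v z}
  left : ∀ v w, #{z ∈ Ico w v | T v z} ≤ #{z ∈ Ico w v | T z v}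
  sparse : ∀ (u : ℤ) (N : ℕ), 36864 * #(backPairs T (Ico u (u + N)) id) ≤ N ^ 2 + M * N

/-- Reversing both the ordering and all the edges. -/
def reverseNeg (T : ℤ → ℤ → Prop) (x y : ℤ) : Prop := T (-y) (-x)

lemma ContainsU.of_reverseNeg {T : ℤ → ℤ → Prop} (h : ContainsU (reverseNeg T) 2) :
    ContainsU T 2 := by
  obtain ⟨f, hf, h⟩ := h
  refine ⟨fun p => -f (-p.1, p.2.rev), fun p q hpq => ?_, fun p q hpq => ?_⟩
  · have := hf (neg_injective hpq)
    simp only [Prod.mk.injEq, neg_inj, Fin.rev_inj] at this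
    exact Prod.ext this.1 this.2
  · have := h (-q.1, q.2.rev) (-p.1, p.2.rev)
    simp only [reverseNeg] at this
    apply this
    rcases hpq with ⟨h₁, h₂⟩ | h₁
    · exact .inl ⟨by simp [h₁], by simpa using h₂⟩
    · exact .inr (by simp [h₁])

lemma card_filter_neg (A B : Finset ℤ) (p : ℤ → Prop) [DecidablePred p]
    (h : ∀ x, x ∈ A ↔ -x ∈ B) :
    #{x ∈ A | p (-x)} = #{x ∈ B | p x} := by
  refine card_bij (fun x _ => -x) ?_ ?_ ?_
  · intro x hx
    simp only [mem_filter] at hx ⊢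
    exact ⟨(h x).1 hx.1, hx.2⟩
  · intro x _ y _ hxy
    exact neg_injective hxy
  · intro y hy
    simp only [mem_filter] at hy
    exact ⟨-y, by simp [h, hy], neg_neg y⟩

namespace IsMedianOrder

variable {M : ℕ} {T : ℤ → ℤ → Prop}

lemma reverseNeg (h : IsMedianOrder M T) : IsMedianOrder M (reverseNeg T) where
  isTournament := ⟨fun x => h.isTournament.1 _, fun x y hxy =>
    h.isTournament.2 _ _ (fun h' => hxy (neg_injective h').symm)⟩
  free := fun h' => h.free h'.of_reverseNeg
  right := fun v w => by
    have := h.left (-v) (-w)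
    rw [← card_filter_neg (Ioc v w) _ (fun z => T (-v) z), ← card_filter_neg (Ioc v w) _
      (fun z => T z (-v))] at this
    · exact this
    all_goals intro x; simp only [mem_Ioc, mem_Ico]; lia
  left := fun v w => by
    have := h.right (-v) (-w)
    rw [← card_filter_neg (Ico w v) _ (fun z => T (-v) z), ← card_filter_neg (Ico w v) _
      (fun z => T z (-v))] at this
    · exact this
    all_goals intro x; simp only [mem_Ioc, mem_Ico]; lia
  sparse := fun u N => by
    refine le_trans (Nat.mul_le_mul_left _ ?_) (h.sparse (1 - u - N) N)
    refine card_le_card_of_injOn (fun p => (-p.2, -p.1)) ?_ ?_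
    · rintro ⟨x, y⟩ hp
      simp only [backPairs, coe_filter, mem_product, mem_Ico, id_eq, Set.mem_ofPred_eq] at hp ⊢
      refine ⟨by lia, by lia, hp.2.2⟩
    · rintro ⟨x, y⟩ _ ⟨x', y'⟩ _ hxy
      simp only [Prod.mk.injEq, neg_inj] at hxy
      exact Prod.ext hxy.2 hxy.1

lemma exists_card_leftHeavy_le (M : ℕ) : ∃ m s₀ : ℕ, ∀ {T : ℤ → ℤ → Prop}, IsMedianOrder M T →
    ∀ s : ℕ, s₀ ≤ s → ∀ u : ℤ, #{v ∈ Ico u (u + 2 * s) | LeftHeavy T s v} ≤ m := by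
  refine ⟨36864, 256 * 18432 ^ 4 + 6 * M + 16, fun {T} h s hs u => ?_⟩
  have hT := h.isTournament
  by_contra! hcon
  set I := Ico (u - 4 * s) (u + 2 * s) with hI
  have hIcard : #I = 6 * s := by
    rw [hI, Int.card_Ico]; lia
  refine h.free (hT.containsU_two_of_trianglePairs (K := 18432) (W := I) (by norm_num)
    (by lia) hcon.le fun v hv => ?_)
  obtain ⟨hvu, hv⟩ := mem_filter.1 hv
  rw [mem_Ico] at hvu
  set A := {a ∈ Ico (v - 4 * s) v | T v a} with hA
  have hAcard : s < 8 * #A := hv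
  set P := {p ∈ I ×ˢ I | p.2 < p.1 ∧ p.1 < v ∧ T v p.2 ∧ T p.1 v} with hP
  have h₁ : #{p ∈ A ×ˢ A | p.1 < p.2} ≤ #P := by
    have e₁ : #{p ∈ A ×ˢ A | p.1 < p.2} = ∑ a ∈ A, #{b ∈ A | a < b} := by
      rw [card_filter, sum_product]
      simp only [card_filter]
    have e₂ : ∑ a ∈ A, #{b ∈ I | a < b ∧ b < v ∧ T b v} ≤ #P := by
      have : #P = ∑ a ∈ I, #{b ∈ I | a < b ∧ b < v ∧ T v a ∧ T b v} := by
        rw [hP, card_filter, sum_product_right]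
        simp only [card_filter]
      rw [this]
      have hAI : A ⊆ I := fun a ha => by
        simp only [hA, hI, mem_filter, mem_Ico] at ha ⊢
        lia
      refine (sum_le_sum fun a ha => ?_).trans (sum_le_sum_of_subset hAI)
      refine card_le_card fun b hb => ?_
      have := (mem_filter.1 ha).2
      simp only [mem_filter] at hb ⊢
      tauto
    rw [e₁]
    refine (sum_le_sum fun a ha => ?_).trans e₂
    have := h.left v (a + 1)
    refine (card_le_card fun b hb => ?_).trans (this.trans (card_le_card fun b hb => ?_))
    · simp only [hA, mem_filter, mem_Ico] at hb ⊢
      exact ⟨by lia, hb.1.2⟩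
    · simp only [hA, hI, mem_filter, mem_Ico] at ha hb ⊢
      exact ⟨by lia, by lia, by lia, hb.2⟩
  have h₂ : 2 * #{p ∈ A ×ˢ A | p.1 < p.2} = #A * (#A - 1) := by
    have hlt : IsTournament (fun x y : ℤ => x < y) :=
      ⟨fun x => lt_irrefl x, fun x y hxy => by lia⟩
    convert hlt.two_mul_card_pairs A
  have h₃ : #P ≤ #(trianglePairs T I v) + #(backPairs T I id) := by
    have : P ⊆ trianglePairs T I v ∪ (backPairs T I id).image Prod.swap := by
      rintro ⟨b, a⟩ hp
      simp only [hP, mem_filter, mem_product] at hp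
      simp only [mem_union, mem_image, trianglePairs, backPairs, mem_filter, mem_product,
        Prod.exists, Prod.swap_prod_mk, Prod.mk.injEq, id_eq]
      by_cases hab : T a b
      · exact .inl ⟨hp.1, hp.2.2.2.2, hp.2.2.2.1, hab⟩
      · exact .inr ⟨a, b, ⟨⟨hp.1.2, hp.1.1⟩, hp.2.1, hT.of_not hp.2.1.ne hab⟩, rfl, rfl⟩
    exact (card_le_card this).trans ((card_union_le _ _).trans
      (Nat.add_le_add_left card_image_le _))
  have h₄ : 36864 * #(backPairs T I id) ≤ (6 * s) ^ 2 + M * (6 * s) := by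
    have := h.sparse (u - 4 * s) (6 * s)
    have e : u - 4 * (s : ℤ) + ((6 * s : ℕ) : ℤ) = u + 2 * s := by push_cast; ring
    rwa [e] at this
  have h₅ : s * s ≤ 256 * #P := by
    have : s * s ≤ (8 * #A) * (16 * (#A - 1)) := Nat.mul_le_mul (by lia) (by lia)
    have e : (8 * #A) * (16 * (#A - 1)) = 128 * (#A * (#A - 1)) := by ring
    lia
  have h₆ : M * (6 * s) ≤ s * s := by
    have : 6 * M * s ≤ s * s := Nat.mul_le_mul_right _ (by lia)
    linarith
  rw [hIcard]
  nlinarith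

lemma exists_card_heavy_le (M : ℕ) : ∃ m s₀ : ℕ, ∀ {T : ℤ → ℤ → Prop}, IsMedianOrder M T →
    ∀ s : ℕ, s₀ ≤ s → ∀ u : ℤ, #{v ∈ Ico u (u + 2 * s) | LeftHeavy T s v} ≤ m ∧
      #{v ∈ Ico u (u + 2 * s) | RightHeavy T s v} ≤ m := by
  obtain ⟨m, s₀, hm⟩ := exists_card_leftHeavy_le M
  refine ⟨m, s₀, fun {T} h s hs u => ⟨hm h s hs u, ?_⟩⟩
  refine le_trans ?_ (hm h.reverseNeg s hs (1 - u - 2 * s))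
  rw [← card_filter_neg (Ico (1 - u - 2 * s) (1 - u - 2 * s + 2 * s)) (Ico u (u + 2 * s)) _
    (by intro x; simp only [mem_Ico]; lia)]
  refine card_le_card fun v hv => ?_
  rw [mem_filter] at hv ⊢
  refine ⟨hv.1, ?_⟩
  have := hv.2
  unfold LeftHeavy _root_.reverseNeg
  unfold RightHeavy at this
  rwa [card_filter_neg (Ico (v - 4 * s) v) (Ioc (-v) (-v + 4 * s)) (fun z => T z (-v))
    (by intro x; simp only [mem_Ioc, mem_Ico]; lia)]

/-- In a `𝒰₂`-free tournament, backward four-cycles contain vertices that are heavy at the scale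
of the cycle. -/
lemma not_backward_four_cycle (h : IsMedianOrder M T) {s : ℕ} (hs : 16 ≤ s) {p p' q q' : ℤ}
    (hpp : p ≠ p') (hqq : q ≠ q')
    (hp : ¬ RightHeavy T s p) (hp' : ¬ RightHeavy T s p')
    (hq : ¬ LeftHeavy T s q) (hq' : ¬ LeftHeavy T s q')
    (h₁ : p + s ≤ q) (h₂ : p + s ≤ q') (h₃ : p' + s ≤ q) (h₄ : p' + s ≤ q')
    (h₅ : q' ≤ p + 4 * s) (h₆ : q ≤ p' + 4 * s)
    (e₁ : T q p) (e₂ : T q p') (e₃ : T q' p) (e₄ : T q' p') : False := by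
  have hT := h.isTournament
  unfold RightHeavy at hp hp'
  unfold LeftHeavy at hq hq'
  set B₁ := {z ∈ Ioc p (p + 4 * s) | T z p}
  set B₂ := {z ∈ Ioc p' (p' + 4 * s) | T z p'}
  set B₃ := {z ∈ Ico (q - 4 * s) q | T q z}
  set B₄ := {z ∈ Ico (q' - 4 * s) q' | T q' z}
  set Z := Ioo (max p p') (min q q') \ ((B₁ ∪ B₂) ∪ (B₃ ∪ B₄)) with hZ
  have hZcard : 1 < #Z := by
    have hc : s - 1 ≤ #(Ioo (max p p') (min q q')) := by
      rw [Int.card_Ioo]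
      have : max p p' + s ≤ min q q' := by simp [*]; lia
      lia
    have e₁ := le_card_sdiff ((B₁ ∪ B₂) ∪ (B₃ ∪ B₄)) (Ioo (max p p') (min q q'))
    have e₂ := card_union_le (B₁ ∪ B₂) (B₃ ∪ B₄)
    have e₃ := card_union_le B₁ B₂
    have e₄ := card_union_le B₃ B₄
    lia
  have hZT : ∀ z ∈ Z, T p z ∧ T p' z ∧ T z q ∧ T z q' := by
    intro z hz
    simp only [hZ, mem_sdiff, mem_Ioo, mem_union, not_or, max_lt_iff, lt_min_iff] at hz
    obtain ⟨⟨⟨hz₁, hz₂⟩, hz₃, hz₄⟩, ⟨n₁, n₂⟩, n₃, n₄⟩ := hz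
    simp only [B₁, B₂, B₃, B₄, mem_filter, mem_Ioc, mem_Ico, not_and] at n₁ n₂ n₃ n₄
    exact ⟨hT.of_not (by lia) (n₁ (by lia)), hT.of_not (by lia) (n₂ (by lia)),
      hT.of_not (by lia) (n₃ (by lia)), hT.of_not (by lia) (n₄ (by lia))⟩
  obtain ⟨z, hz, z', hz', hzz⟩ := one_lt_card.1 hZcard
  obtain ⟨a₁, a₂, a₃, a₄⟩ := hZT z hz
  obtain ⟨b₁, b₂, b₃, b₄⟩ := hZT z' hz'
  exact h.free (hT.containsU_two hpp hzz hqq a₁ b₁ a₂ b₂ a₃ a₄ b₃ b₄ e₁ e₂ e₃ e₄)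

variable {m s₀ : ℕ}

/-- The heavy vertices are sparse at every scale from `s₀` on. -/
def HeavyBound (T : ℤ → ℤ → Prop) (m s₀ : ℕ) : Prop :=
  ∀ s : ℕ, s₀ ≤ s → ∀ u : ℤ, #{v ∈ Ico u (u + 2 * s) | LeftHeavy T s v} ≤ m ∧
    #{v ∈ Ico u (u + 2 * s) | RightHeavy T s v} ≤ m

lemma false_of_separated_sets (h : IsMedianOrder M T) (hb : HeavyBound T m s₀) {t : ℕ}
    (ht : s₀ ≤ t) (ht' : 16 ≤ t) {A B : Finset ℤ} {u w : ℤ}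
    (hA : m + 4 ≤ #A) (hB : m + 4 ≤ #B)
    (hAu : A ⊆ Ico u (u + 2 * t)) (hBw : B ⊆ Ico w (w + 2 * t))
    (hAB : ∀ a ∈ A, ∀ b ∈ B, a + t ≤ b ∧ b ≤ a + 4 * t)
    (hf : ∀ a ∈ A, #{b ∈ B | T a b} ≤ 1) : False := by
  have hA' : 1 < #{a ∈ A | ¬ RightHeavy T t a} := by
    have h₁ := card_filter_add_card_filter_not (s := A) (fun a => RightHeavy T t a)
    have h₂ := (card_le_card (filter_subset_filter (fun a => RightHeavy T t a) hAu)).trans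
      (hb t ht u).2
    lia
  obtain ⟨p, hp, p', hp', hpp⟩ := one_lt_card.1 hA'
  rw [mem_filter] at hp hp'
  set S := ({b ∈ B | LeftHeavy T t b} ∪ {b ∈ B | T p b}) ∪ {b ∈ B | T p' b} with hS
  have hB' : 1 < #(B \ S) := by
    have h₁ := le_card_sdiff S B
    have h₂ := card_union_le ({b ∈ B | LeftHeavy T t b} ∪ {b ∈ B | T p b}) {b ∈ B | T p' b}
    have h₃ := card_union_le {b ∈ B | LeftHeavy T t b} {b ∈ B | T p b}
    have h₄ := (card_le_card (filter_subset_filter (fun a => LeftHeavy T t a) hBw)).trans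
      (hb t ht w).1
    have h₅ := hf p hp.1
    have h₆ := hf p' hp'.1
    lia
  obtain ⟨q, hq, q', hq', hqq⟩ := one_lt_card.1 hB'
  simp only [hS, mem_sdiff, mem_union, mem_filter, not_or, not_and] at hq hq'
  obtain ⟨hqB, ⟨hq₁, hq₂⟩, hq₃⟩ := hq
  obtain ⟨hqB', ⟨hq₁', hq₂'⟩, hq₃'⟩ := hq'
  have a₁ := hAB p hp.1 q hqB
  have a₂ := hAB p hp.1 q' hqB'
  have a₃ := hAB p' hp'.1 q hqB
  have a₄ := hAB p' hp'.1 q' hqB'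
  have hT := h.isTournament
  exact h.not_backward_four_cycle ht' hpp hqq hp.2 hp'.2 (hq₁ hqB) (hq₁' hqB')
    a₁.1 a₂.1 a₃.1 a₄.1 a₂.2 a₃.2
    (hT.of_not (by lia) (hq₂ hqB)) (hT.of_not (by lia) (hq₃ hqB))
    (hT.of_not (by lia) (hq₂' hqB')) (hT.of_not (by lia) (hq₃' hqB'))

/-- A set of vertices spanning hardly any forward edges has logarithmic size. -/
lemma card_le_of_forward_le_one (h : IsMedianOrder M T) (hb : HeavyBound T m s₀) (j : ℕ) :
    ∀ (u : ℤ) (Y : Finset ℤ), Y ⊆ Ico u (u + 2 ^ j) →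
      (∀ y ∈ Y, #{z ∈ Y | y < z ∧ T y z} ≤ 1) →
      #Y ≤ 4 * (s₀ + 16) + 2 * (m + 4) * j := by
  induction j with
  | zero =>
    intro u Y hY _
    have := card_le_card hY
    simp at this
    lia
  | succ j ih =>
    intro u Y hY hf
    by_cases hsmall : 2 ^ (j + 1) < 4 * (s₀ + 16)
    · have := card_le_card hY
      rw [Int.card_Ico] at this
      have e : (u + 2 ^ (j + 1) - u).toNat = 2 ^ (j + 1) := by
        rw [add_sub_cancel_left]
        exact_mod_cast Int.toNat_natCast (2 ^ (j + 1))
      lia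
    rcases j with _ | j
    · simp at hsmall; lia
    obtain ⟨t, ht⟩ : ∃ t : ℕ, t = 2 ^ j := ⟨_, rfl⟩
    have ht₂ : (2 : ℤ) ^ (j + 1) = 2 * t := by rw [ht]; push_cast; ring
    have ht₄ : (2 : ℤ) ^ (j + 1 + 1) = 4 * t := by rw [ht]; push_cast; ring
    have htl : s₀ + 16 ≤ t := by
      have : 2 ^ (j + 1 + 1) = 4 * t := by rw [ht]; ring
      lia
    rw [ht₄] at hY
    rw [ht₂] at ih
    have hsub : ∀ A B : Finset ℤ, A ⊆ Y → B ⊆ Y → (∀ a ∈ A, ∀ b ∈ B, a < b) →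
        ∀ a ∈ A, #{b ∈ B | T a b} ≤ 1 := by
      intro A B hA hB hAB a ha
      refine (card_le_card fun b hb => ?_).trans (hf a (hA ha))
      rw [mem_filter] at hb ⊢
      exact ⟨hB hb.1, hAB a ha b hb.1, hb.2⟩
    have key : ∀ w : ℤ, u + t ≤ w → w ≤ u + 2 * t →
        #{y ∈ Y | y < w} < m + 4 ∨ #{y ∈ Y | w + t ≤ y} < m + 4 := by
      intro w hw hw'
      by_contra! hcon
      refine h.false_of_separated_sets hb (t := t) (by lia) (by lia) hcon.1 hcon.2 (u := u)
        (w := u + 2 * t) ?_ ?_ ?_ (hsub _ _ (filter_subset _ _) (filter_subset _ _) ?_)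
      · intro y hy
        have := hY (mem_filter.1 hy).1
        simp only [mem_filter, mem_Ico] at hy this ⊢
        lia
      · intro y hy
        have := hY (mem_filter.1 hy).1
        simp only [mem_filter, mem_Ico] at hy this ⊢
        lia
      · intro a ha b hb
        have h₁ := hY (mem_filter.1 ha).1
        have h₂ := hY (mem_filter.1 hb).1
        simp only [mem_filter, mem_Ico] at ha hb h₁ h₂
        lia
      · intro a ha b hb
        simp only [mem_filter] at ha hb
        lia
    have key₁ := key (u + t) (by lia) (by lia)
    have key₂ := key (u + 2 * t) (by lia) (by lia)
    have shrink : ∀ w : ℤ, #{y ∈ Y | w ≤ y ∧ y < w + 2 * t} ≤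
        4 * (s₀ + 16) + 2 * (m + 4) * (j + 1) := by
      intro w
      refine ih w _ (fun y hy => ?_) fun y hy => ?_
      · rw [mem_filter] at hy
        exact mem_Ico.2 hy.2
      · refine (card_le_card ?_).trans (hf y (filter_subset _ _ hy))
        exact filter_subset_filter _ (filter_subset _ _)
    have hcover : ∀ w : ℤ, #Y ≤ #{y ∈ Y | w ≤ y ∧ y < w + 2 * t} + #{y ∈ Y | y < w} +
        #{y ∈ Y | w + 2 * t ≤ y} := by
      intro w
      have : Y ⊆ {y ∈ Y | w ≤ y ∧ y < w + 2 * t} ∪ {y ∈ Y | y < w} ∪ {y ∈ Y | w + 2 * t ≤ y} := by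
        intro y hy
        simp only [mem_union, mem_filter, hy, true_and]
        lia
      exact (card_le_card this).trans ((card_union_le _ _).trans
        (Nat.add_le_add_right (card_union_le _ _) _))
    have hlow : #{y ∈ Y | y < u} = 0 := by
      rw [card_eq_zero, filter_eq_empty_iff]
      intro y hy
      have := mem_Ico.1 (hY hy)
      lia
    have hhigh : #{y ∈ Y | u + 4 * t ≤ y} = 0 := by
      rw [card_eq_zero, filter_eq_empty_iff]
      intro y hy
      have := mem_Ico.1 (hY hy)
      lia
    have c₀ := hcover u
    have c₁ := hcover (u + t)
    have c₂ := hcover (u + 2 * t)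
    have d₀ := shrink u
    have d₁ := shrink (u + t)
    have d₂ := shrink (u + 2 * t)
    have e₁ : u + t + 2 * (t : ℤ) = u + 2 * t + t := by ring
    have e₀ : u + t + (t : ℤ) = u + 2 * t := by ring
    have e₂ : u + 2 * t + 2 * (t : ℤ) = u + 4 * t := by ring
    have e₃ : 2 * (m + 4) * (j + 1 + 1) = 2 * (m + 4) * (j + 1) + 2 * (m + 4) := by ring
    rw [e₁] at c₁ d₁
    rw [e₀] at key₁
    rw [e₂] at c₂ d₂
    rcases key₁ with k₁ | k₁
    · rcases key₂ with k₂ | k₂ <;> lia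
    · lia

/-- The mirror image of `card_le_of_forward_le_one`. -/
lemma card_le_of_backward_le_one (h : IsMedianOrder M T)
    (hb : HeavyBound (_root_.reverseNeg T) m s₀) (j : ℕ) (u : ℤ) (Y : Finset ℤ)
    (hY : Y ⊆ Ico u (u + 2 ^ j)) (hf : ∀ y ∈ Y, #{z ∈ Y | z < y ∧ T z y} ≤ 1) :
    #Y ≤ 4 * (s₀ + 16) + 2 * (m + 4) * j := by
  rw [← card_image_of_injective Y neg_injective]
  refine h.reverseNeg.card_le_of_forward_le_one hb j (1 - u - 2 ^ j) _ ?_ ?_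
  · intro y hy
    obtain ⟨z, hz, rfl⟩ := mem_image.1 hy
    have := mem_Ico.1 (hY hz)
    rw [mem_Ico]
    lia
  · intro y hy
    obtain ⟨z, hz, rfl⟩ := mem_image.1 hy
    refine le_trans (le_of_eq ?_) (hf z hz)
    refine Eq.trans ?_ (card_filter_neg (Y.image Neg.neg) Y (fun x => x < z ∧ T x z) fun x => ?_)
    · congr 1
      refine filter_congr fun x _ => ?_
      simp only [_root_.reverseNeg, neg_neg]
      exact and_congr_left fun _ => by lia
    · simp only [mem_image]
      exact ⟨by rintro ⟨a, ha, rfl⟩; simpa using ha, fun hx => ⟨_, hx, neg_neg x⟩⟩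

lemma card_filter_product_fst_le {A B : Finset ℤ} (p : ℤ → ℤ → Prop)
    [∀ y x, Decidable (p y x)] {c : ℕ}
    (h : ∀ x ∈ B, #{y ∈ A | p y x} ≤ c) : #{e ∈ A ×ˢ B | p e.1 e.2} ≤ #B * c := by
  rw [card_filter, sum_product_right]
  simp only [← card_filter]
  exact sum_le_card_nsmul _ _ _ h

lemma card_filter_product_snd_le {A B : Finset ℤ} (p : ℤ → ℤ → Prop)
    [∀ y x, Decidable (p y x)] {c : ℕ}
    (h : ∀ y ∈ A, #{x ∈ B | p y x} ≤ c) : #{e ∈ A ×ˢ B | p e.1 e.2} ≤ #A * c := by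
  rw [card_filter, sum_product]
  simp only [← card_filter]
  exact sum_le_card_nsmul _ _ _ h

/-- The starting points of long backward edges ending in `x`, without the heavy ones. -/
noncomputable def tails (T : ℤ → ℤ → Prop) (s : ℕ) (x : ℤ) : Finset ℤ :=
  {y ∈ Icc (x - 3 * s) (x - 2 * s) | T x y ∧ ¬ RightHeavy T s y}

/-- The end points of long backward edges starting in `y`, without the heavy ones. -/
noncomputable def heads (T : ℤ → ℤ → Prop) (s : ℕ) (y : ℤ) : Finset ℤ :=
  {x ∈ Icc (y + 2 * s) (y + 3 * s) | T x y ∧ ¬ LeftHeavy T s x}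

lemma backward_edge_cases (h : IsMedianOrder M T) {s : ℕ} (hs : 16 ≤ s) {x y : ℤ}
    (hxy : T x y) (h₁ : y + 2 * s ≤ x) (h₂ : x ≤ y + 3 * s) :
    (RightHeavy T s y ∨ y ∈ tails T s x ∧ #{b ∈ tails T s x | y < b ∧ T y b} ≤ 1) ∨
    (LeftHeavy T s x ∨ x ∈ heads T s y ∧ #{c ∈ heads T s y | c < x ∧ T c x} ≤ 1) := by
  have hT := h.isTournament
  by_contra! hcon
  obtain ⟨⟨hy, hy'⟩, hx, hx'⟩ := hcon
  have hyt : y ∈ tails T s x := by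
    simp only [tails, mem_filter, mem_Icc]
    exact ⟨by lia, hxy, hy⟩
  have hxt : x ∈ heads T s y := by
    simp only [heads, mem_filter, mem_Icc]
    exact ⟨by lia, hxy, hx⟩
  obtain ⟨b, hb, b', hb', hbb⟩ := one_lt_card.1 (hy' hyt)
  obtain ⟨c, hc, c', hc', hcc⟩ := one_lt_card.1 (hx' hxt)
  simp only [tails, heads, mem_filter, mem_Icc] at hb hb' hc hc'
  have key : ∀ b c : ℤ, ((x - 3 * s ≤ b ∧ b ≤ x - 2 * s) ∧ T x b ∧ ¬ RightHeavy T s b) ∧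
      y < b ∧ T y b → ((y + 2 * s ≤ c ∧ c ≤ y + 3 * s) ∧ T c y ∧ ¬ LeftHeavy T s c) ∧
      c < x ∧ T c x → T b c := by
    intro b c ⟨⟨hb₁, hb₂, hb₃⟩, hb₄, hb₅⟩ ⟨⟨hc₁, hc₂, hc₃⟩, hc₄, hc₅⟩
    by_contra hbc
    exact h.not_backward_four_cycle hs (p := y) (p' := b) (q := c) (q' := x) (by lia) (by lia)
      hy hb₃ hc₃ hx (by lia) (by lia) (by lia) (by lia) (by lia) (by lia)
      hc₂ (hT.of_not (by lia) hbc) hxy hb₂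
  exact h.free (hT.containsU_two (a := y) (a' := x) (b := b) (b' := b') (c := c) (c' := c')
    (by lia) hbb hcc hb.2.2 hb'.2.2 hb.1.2.1 hb'.1.2.1
    (key _ _ hb hc) (key _ _ hb hc') (key _ _ hb' hc) (key _ _ hb' hc')
    hc.1.2.1 hc.2.2 hc'.1.2.1 hc'.2.2)

lemma card_scale_le (h : IsMedianOrder M T) (hb : HeavyBound T m s₀)
    (hb' : HeavyBound (_root_.reverseNeg T) m s₀) {s j : ℕ} (hs : s₀ + 16 ≤ s)
    (hj : s + 1 ≤ 2 ^ j) (V : Finset ℤ) :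
    #{e ∈ V ×ˢ V | T e.2 e.1 ∧ e.1 + 2 * (s : ℤ) ≤ e.2 ∧ e.2 ≤ e.1 + 3 * (s : ℤ)} ≤
      #V * (2 * (m + (4 * (s₀ + 16) + 2 * (m + 4) * j))) := by
  set R := 4 * (s₀ + 16) + 2 * (m + 4) * j with hR
  have hj' : (s : ℤ) + 1 ≤ 2 ^ j := by exact_mod_cast hj
  let p : ℤ → ℤ → Prop := fun y x => y ∈ Icc (x - 3 * s) (x - 2 * s) ∧
    (RightHeavy T s y ∨ y ∈ tails T s x ∧ #{b ∈ tails T s x | y < b ∧ T y b} ≤ 1)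
  let q : ℤ → ℤ → Prop := fun y x => x ∈ Icc (y + 2 * s) (y + 3 * s) ∧
    (LeftHeavy T s x ∨ x ∈ heads T s y ∧ #{c ∈ heads T s y | c < x ∧ T c x} ≤ 1)
  have hp : #{e ∈ V ×ˢ V | p e.1 e.2} ≤ #V * (m + R) := by
    refine card_filter_product_fst_le p fun x _ => ?_
    have h₁ := (hb s (by lia) (x - 3 * s)).2
    have h₂ := h.card_le_of_forward_le_one hb j (x - 3 * s)
      {y ∈ tails T s x | #{b ∈ tails T s x | y < b ∧ T y b} ≤ 1} (fun y hy => by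
        have := (mem_filter.1 hy).1
        rw [tails, mem_filter, mem_Icc] at this
        rw [mem_Ico]
        lia) fun y hy =>
          (card_le_card (filter_subset_filter _ (filter_subset _ _))).trans (mem_filter.1 hy).2
    refine (card_le_card ?_).trans ((card_union_le _ _).trans (Nat.add_le_add h₁ h₂))
    intro y hy
    simp only [p, mem_filter, mem_Icc] at hy
    rw [mem_union, mem_filter, mem_filter, mem_Ico]
    exact hy.2.2.imp (fun h' => ⟨by lia, h'⟩) id
  have hq : #{e ∈ V ×ˢ V | q e.1 e.2} ≤ #V * (m + R) := by
    refine card_filter_product_snd_le q fun y _ => ?_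
    have h₁ := (hb s (by lia) (y + 2 * s)).1
    have h₂ := h.card_le_of_backward_le_one hb' j (y + 2 * s)
      {x ∈ heads T s y | #{c ∈ heads T s y | c < x ∧ T c x} ≤ 1} (fun x hx => by
        have := (mem_filter.1 hx).1
        rw [heads, mem_filter, mem_Icc] at this
        rw [mem_Ico]
        lia) fun x hx =>
          (card_le_card (filter_subset_filter _ (filter_subset _ _))).trans (mem_filter.1 hx).2
    refine (card_le_card ?_).trans ((card_union_le _ _).trans (Nat.add_le_add h₁ h₂))
    intro x hx
    simp only [q, mem_filter, mem_Icc] at hx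
    rw [mem_union, mem_filter, mem_filter, mem_Ico]
    exact hx.2.2.imp (fun h' => ⟨by lia, h'⟩) id
  calc _ ≤ #({e ∈ V ×ˢ V | p e.1 e.2} ∪ {e ∈ V ×ˢ V | q e.1 e.2}) := by
        refine card_le_card fun e he => ?_
        rw [mem_filter] at he
        rw [mem_union, mem_filter, mem_filter]
        have hc := h.backward_edge_cases (by lia) he.2.1 he.2.2.1 he.2.2.2
        exact hc.imp (fun h' => ⟨he.1, mem_Icc.2 (by lia), h'⟩)
          fun h' => ⟨he.1, mem_Icc.2 (by lia), h'⟩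
    _ ≤ #V * (m + R) + #V * (m + R) := (card_union_le _ _).trans (Nat.add_le_add hp hq)
    _ = #V * (2 * (m + R)) := by ring

/-- The number of backward edges of length at most `2 ^ k`. -/
lemma card_short_le (h : IsMedianOrder M T) (hb : HeavyBound T m s₀)
    (hb' : HeavyBound (_root_.reverseNeg T) m s₀) (V : Finset ℤ) {J : ℕ} (k : ℕ) (hk : k ≤ J) :
    #{e ∈ V ×ˢ V | T e.2 e.1 ∧ e.1 < e.2 ∧ e.2 ≤ e.1 + 2 ^ k} ≤
      #V * (4 * (s₀ + 16) + k * (4 * (m + (4 * (s₀ + 16) + 2 * (m + 4) * J)))) := by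
  induction k with
  | zero =>
    refine (card_filter_product_fst_le (fun y x => T x y ∧ y < x ∧ x ≤ y + 2 ^ 0) (c := 1)
      fun x _ => ?_).trans (Nat.mul_le_mul_left _ ?_)
    swap
    · lia
    rw [card_le_one]
    intro a ha b hb
    simp only [mem_filter, pow_zero] at ha hb
    lia
  | succ k ih =>
    by_cases hsmall : 2 ^ (k + 1) < 4 * (s₀ + 16)
    · refine (card_filter_product_fst_le (fun y x => T x y ∧ y < x ∧ x ≤ y + 2 ^ (k + 1))
        (c := 4 * (s₀ + 16)) fun x _ => ?_).trans (Nat.mul_le_mul_left _ (Nat.le_add_right _ _))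
      have hsmall' : (2 : ℤ) ^ (k + 1) < 4 * (s₀ + 16) := by exact_mod_cast hsmall
      calc _ ≤ #(Ico (x - 4 * (s₀ + 16 : ℕ)) x) := by
            refine card_le_card fun y hy => ?_
            rw [mem_filter] at hy
            rw [mem_Ico]
            lia
        _ = 4 * (s₀ + 16) := by
          rw [Int.card_Ico]
          lia
    rcases k with _ | _ | k
    · lia
    · lia
    obtain ⟨t, ht⟩ : ∃ t : ℕ, t = 2 ^ k := ⟨_, rfl⟩
    have ht₂ : (2 : ℤ) ^ (k + 1 + 1) = 4 * t := by rw [ht]; push_cast; ring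
    have ht₃ : (2 : ℤ) ^ (k + 1 + 1 + 1) = 8 * t := by rw [ht]; push_cast; ring
    have ht₄ : 2 ^ (k + 1 + 1) = 4 * t := by rw [ht]; ring
    have ht₅ : 2 ^ (k + 1 + 1 + 1) = 8 * t := by rw [ht]; ring
    have ht₀ : 1 ≤ t := ht ▸ Nat.one_le_two_pow
    have hJ : 4 * t ≤ 2 ^ J := ht₄ ▸ Nat.pow_le_pow_right (by lia) (by lia)
    have h₁ := h.card_scale_le hb hb' (s := 2 * t) (j := J) (by lia) (by lia) V
    have h₂ := h.card_scale_le hb hb' (s := 3 * t) (j := J) (by lia) (by lia) V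
    have h₀ := ih (by lia)
    rw [ht₂] at h₀
    rw [ht₃]
    generalize 4 * (s₀ + 16) + 2 * (m + 4) * J = R at *
    calc _ ≤ #(({e ∈ V ×ˢ V | T e.2 e.1 ∧ e.1 < e.2 ∧ e.2 ≤ e.1 + 4 * (t : ℤ)} ∪
          {e ∈ V ×ˢ V | T e.2 e.1 ∧ e.1 + 2 * ((2 * t : ℕ) : ℤ) ≤ e.2 ∧
            e.2 ≤ e.1 + 3 * ((2 * t : ℕ) : ℤ)}) ∪
          {e ∈ V ×ˢ V | T e.2 e.1 ∧ e.1 + 2 * ((3 * t : ℕ) : ℤ) ≤ e.2 ∧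
            e.2 ≤ e.1 + 3 * ((3 * t : ℕ) : ℤ)}) := by
          refine card_le_card fun e he => ?_
          simp only [mem_union, mem_filter] at he ⊢
          obtain ⟨he₁, he₂, he₃⟩ := he
          simp only [he₁, he₂, true_and]
          push_cast
          lia
      _ ≤ _ := (card_union_le _ _).trans (Nat.add_le_add ((card_union_le _ _).trans
          (Nat.add_le_add h₀ h₁)) h₂)
      _ = _ := by ring

end IsMedianOrder

section Minimal

variable {α : Type*} [LinearOrder α] {T : ℤ → ℤ → Prop}

lemma card_backPairs_eq_erase {V : Finset ℤ} {v : ℤ} (hv : v ∈ V) (r : ℤ → α) :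
    #(backPairs T V r) = #(backPairs T (V.erase v) r) + #{z ∈ V | r v < r z ∧ T z v} +
      #{z ∈ V | r z < r v ∧ T v z} := by
  have h₁ : #{z ∈ V | r v < r z ∧ T z v} = #{p ∈ backPairs T V r | p.1 = v} := by
    refine card_bij (fun z _ => (v, z)) ?_ ?_ ?_
    · intro z hz
      rw [mem_filter] at hz
      simp [backPairs, hv, hz]
    · intro z _ z' _ h
      exact (Prod.ext_iff.1 h).2
    · rintro ⟨x, y⟩ h
      simp only [backPairs, mem_filter, mem_product] at h
      obtain ⟨h, rfl⟩ := h
      exact ⟨y, mem_filter.2 ⟨h.1.2, h.2⟩, rfl⟩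
  have h₂ : #{z ∈ V | r z < r v ∧ T v z} = #{p ∈ backPairs T V r | p.2 = v} := by
    refine card_bij (fun z _ => (z, v)) ?_ ?_ ?_
    · intro z hz
      rw [mem_filter] at hz
      simp [backPairs, hv, hz]
    · intro z _ z' _ h
      exact (Prod.ext_iff.1 h).1
    · rintro ⟨x, y⟩ h
      simp only [backPairs, mem_filter, mem_product] at h
      obtain ⟨h, rfl⟩ := h
      exact ⟨x, mem_filter.2 ⟨h.1.1, h.2⟩, rfl⟩
  rw [h₁, h₂, ← card_union_of_disjoint, ← card_union_of_disjoint]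
  · congr 1
    ext ⟨x, y⟩
    simp only [backPairs, mem_union, mem_filter, mem_product, mem_erase]
    tauto
  · rw [disjoint_left]
    rintro ⟨x, y⟩ h h'
    simp only [backPairs, mem_union, mem_filter, mem_product, mem_erase] at h h'
    obtain ⟨h', rfl⟩ := h'
    rcases h with h | ⟨-, rfl⟩
    · exact h.1.2.1 rfl
    · exact lt_irrefl _ h'.2.1
  · rw [disjoint_left]
    rintro ⟨x, y⟩ h h'
    simp only [backPairs, mem_filter, mem_product, mem_erase] at h h'
    exact h.1.1.1 h'.2

/-- The position of `v` in an optimal ordering cannot be improved. -/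
lemma card_backward_le_of_move {V : Finset ℤ}
    (hmin : ∀ r : ℤ → ℤ, Set.InjOn r V → #(backPairs T V id) ≤ #(backPairs T V r))
    {v : ℤ} (hv : v ∈ V) (hvv : ¬ T v v) (w : ℤ) :
    #{z ∈ V | v < z ∧ T z v} + #{z ∈ V | z < v ∧ T v z} ≤
      #{z ∈ V | w < z ∧ T z v} + #{z ∈ V | z ≤ w ∧ T v z} := by
  let r : ℤ → ℤ := fun x => if x = v then 2 * w + 1 else 2 * x
  have hr : ∀ x, x ≠ v → r x = 2 * x := fun x hx => if_neg hx
  have hrv : r v = 2 * w + 1 := if_pos rfl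
  have h := hmin r fun x _ y _ hxy => by
    by_cases hx : x = v <;> by_cases hy : y = v
    · rw [hx, hy]
    · rw [hx, hrv, hr y hy] at hxy; lia
    · rw [hy, hrv, hr x hx] at hxy; lia
    · rw [hr x hx, hr y hy] at hxy; lia
  rw [card_backPairs_eq_erase hv, card_backPairs_eq_erase hv r] at h
  have h₀ : backPairs T (V.erase v) r = backPairs T (V.erase v) id := by
    refine filter_congr fun p hp => ?_
    rw [mem_product, mem_erase, mem_erase] at hp
    rw [hr _ hp.1.1, hr _ hp.2.1]
    exact and_congr_left fun _ => by simp
  have h₁ : {z ∈ V | r v < r z ∧ T z v} ⊆ {z ∈ V | w < z ∧ T z v} := by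
    intro z hz
    rw [mem_filter] at hz ⊢
    have hzv : z ≠ v := fun h => hvv (h ▸ hz.2.2)
    rw [hrv, hr z hzv] at hz
    exact ⟨hz.1, by lia, hz.2.2⟩
  have h₂ : {z ∈ V | r z < r v ∧ T v z} ⊆ {z ∈ V | z ≤ w ∧ T v z} := by
    intro z hz
    rw [mem_filter] at hz ⊢
    have hzv : z ≠ v := fun h => hvv (h ▸ hz.2.2)
    rw [hrv, hr z hzv] at hz
    exact ⟨hz.1, by lia, hz.2.2⟩
  have h₃ := card_le_card h₁
  have h₄ := card_le_card h₂
  rw [h₀] at h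
  simp only [id] at h
  lia

lemma card_backPairs_block_le {a b u w : ℤ} (hau : a ≤ u) (hwb : w ≤ b)
    (hmin : ∀ r : ℤ → ℤ, Set.InjOn r (Ico a b) →
      #(backPairs T (Ico a b) id) ≤ #(backPairs T (Ico a b) r))
    {r : ℤ → ℤ} (hr : Set.InjOn r (Ico u w)) (hr' : ∀ x ∈ Ico u w, r x ∈ Ico u w) :
    #(backPairs T (Ico u w) id) ≤ #(backPairs T (Ico u w) r) := by
  let r' : ℤ → ℤ := fun x => if x ∈ Ico u w then r x else x
  have hin : ∀ x ∈ Ico u w, r' x = r x := fun x hx => if_pos hx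
  have hout : ∀ x ∉ Ico u w, r' x = x := fun x hx => if_neg hx
  have h := hmin r' fun x _ y _ hxy => by
    by_cases hx : x ∈ Ico u w <;> by_cases hy : y ∈ Ico u w
    · rw [hin x hx, hin y hy] at hxy
      exact hr hx hy hxy
    · rw [hin x hx, hout y hy] at hxy
      exact absurd (hxy ▸ hr' x hx) hy
    · rw [hout x hx, hin y hy] at hxy
      exact absurd (hxy ▸ hr' y hy) hx
    · rwa [hout x hx, hout y hy] at hxy
  have hsplit : ∀ q : ℤ → ℤ, #(backPairs T (Ico a b) q) = #(backPairs T (Ico u w) q) +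
      #{p ∈ backPairs T (Ico a b) q | ¬ (p.1 ∈ Ico u w ∧ p.2 ∈ Ico u w)} := by
    intro q
    rw [← card_filter_add_card_filter_not (s := backPairs T (Ico a b) q)
      (fun p => p.1 ∈ Ico u w ∧ p.2 ∈ Ico u w)]
    congr 2
    ext p
    simp only [backPairs, mem_filter, mem_product, mem_Ico]
    lia
  rw [hsplit, hsplit r'] at h
  have h₁ : backPairs T (Ico u w) r' = backPairs T (Ico u w) r := by
    refine filter_congr fun p hp => ?_
    rw [mem_product] at hp
    rw [hin _ hp.1, hin _ hp.2]
  have h₂ : {p ∈ backPairs T (Ico a b) r' | ¬ (p.1 ∈ Ico u w ∧ p.2 ∈ Ico u w)} =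
      {p ∈ backPairs T (Ico a b) id | ¬ (p.1 ∈ Ico u w ∧ p.2 ∈ Ico u w)} := by
    ext p
    simp only [backPairs, mem_filter, id]
    refine and_congr_left fun hp => and_congr_right fun _ => and_congr_left fun _ => ?_
    by_cases hx : p.1 ∈ Ico u w <;> by_cases hy : p.2 ∈ Ico u w
    · exact absurd ⟨hx, hy⟩ hp
    · rw [hin _ hx, hout _ hy]
      have := hr' _ hx
      rw [mem_Ico] at hx hy this
      lia
    · rw [hin _ hy, hout _ hx]
      have := hr' _ hy
      rw [mem_Ico] at hx hy this
      lia
    · rw [hout _ hx, hout _ hy]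
  rw [h₁, h₂] at h
  lia

/-- A tournament on `ℤ` all of whose backward edges lie in a finite interval on which the
natural ordering is optimal. -/
lemma IsMedianOrder.of_minimal {M : ℕ}
    (hM : ∀ W : Finset ℤ, ∃ r : ℤ → ℕ, Set.InjOn r W ∧ (∀ x ∈ W, r x < #W) ∧
      36864 * #(backPairs T W r) ≤ #W ^ 2 + M * #W)
    (hT : IsTournament T) (hfree : ¬ ContainsU T 2) {a b : ℤ}
    (hab : ∀ x y, x < y → T y x → a ≤ x ∧ y < b)
    (hmin : ∀ r : ℤ → ℤ, Set.InjOn r (Ico a b) →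
      #(backPairs T (Ico a b) id) ≤ #(backPairs T (Ico a b) r)) : IsMedianOrder M T where
  isTournament := hT
  free := hfree
  right v w := by
    by_cases hv : v ∈ Ico a b
    swap
    · rw [card_eq_zero.2]
      · exact Nat.zero_le _
      · rw [filter_eq_empty_iff]
        intro z hz hzv
        rw [mem_Ioc] at hz
        have := hab v z hz.1 hzv
        rw [mem_Ico] at hv
        lia
    rcases lt_or_ge w v with hwv | hwv
    · simp [Ioc_eq_empty_of_le hwv.le]
    have h := card_backward_le_of_move hmin hv (hT.1 v) w
    have h₁ : #{z ∈ Ico a b | w < z ∧ T z v} + #{z ∈ Ioc v w | T z v} ≤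
        #{z ∈ Ico a b | v < z ∧ T z v} := by
      rw [← card_union_of_disjoint]
      · refine card_le_card fun z hz => ?_
        rw [mem_Ico] at hv
        simp only [mem_union, mem_filter, mem_Ioc, mem_Ico] at hz ⊢
        rcases hz with hz | hz
        · exact ⟨hz.1, by lia, hz.2.2⟩
        · have := hab v z hz.1.1 hz.2
          exact ⟨by lia, hz.1.1, hz.2⟩
      · rw [disjoint_left]
        intro z hz hz'
        simp only [mem_filter, mem_Ioc] at hz hz'
        lia
    have h₂ : #{z ∈ Ico a b | z ≤ w ∧ T v z} ≤
        #{z ∈ Ico a b | z < v ∧ T v z} + #{z ∈ Ioc v w | T v z} := by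
      refine (card_le_card fun z hz => ?_).trans (card_union_le _ _)
      simp only [mem_union, mem_filter, mem_Ioc] at hz ⊢
      rcases lt_or_gt_of_ne (hT.ne hz.2.2) with hvz | hvz
      · exact Or.inr ⟨⟨hvz, hz.2.1⟩, hz.2.2⟩
      · exact Or.inl ⟨hz.1, hvz, hz.2.2⟩
    lia
  left v w := by
    by_cases hv : v ∈ Ico a b
    swap
    · rw [card_eq_zero.2]
      · exact Nat.zero_le _
      · rw [filter_eq_empty_iff]
        intro z hz hzv
        rw [mem_Ico] at hz
        have := hab z v hz.2 hzv
        rw [mem_Ico] at hv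
        lia
    rcases lt_or_ge v w with hwv | hwv
    · simp [Ico_eq_empty_of_le hwv.le]
    have h := card_backward_le_of_move hmin hv (hT.1 v) (w - 1)
    have h₁ : #{z ∈ Ico a b | z ≤ w - 1 ∧ T v z} + #{z ∈ Ico w v | T v z} ≤
        #{z ∈ Ico a b | z < v ∧ T v z} := by
      rw [← card_union_of_disjoint]
      · refine card_le_card fun z hz => ?_
        rw [mem_Ico] at hv
        simp only [mem_union, mem_filter, mem_Ico] at hz ⊢
        rcases hz with hz | hz
        · exact ⟨hz.1, by lia, hz.2.2⟩
        · have := hab z v hz.1.2 hz.2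
          exact ⟨by lia, hz.1.2, hz.2⟩
      · rw [disjoint_left]
        intro z hz hz'
        simp only [mem_filter, mem_Ico] at hz hz'
        lia
    have h₂ : #{z ∈ Ico a b | w - 1 < z ∧ T z v} ≤
        #{z ∈ Ico a b | v < z ∧ T z v} + #{z ∈ Ico w v | T z v} := by
      refine (card_le_card fun z hz => ?_).trans (card_union_le _ _)
      simp only [mem_union, mem_filter, mem_Ico] at hz ⊢
      rcases lt_or_gt_of_ne (hT.ne hz.2.2) with hvz | hvz
      · exact Or.inr ⟨⟨by lia, hvz⟩, hz.2.2⟩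
      · exact Or.inl ⟨hz.1, hvz, hz.2.2⟩
    lia
  sparse u N := by
    set W := Ico (max u a) (min (u + N) b) with hW
    have hWN : #W ≤ N := by
      rw [hW, Int.card_Ico]
      lia
    obtain ⟨r, hr, hr', hrM⟩ := hM W
    have h₁ : backPairs T (Ico u (u + N)) id ⊆ backPairs T W id := by
      intro p hp
      simp only [backPairs, hW, mem_filter, mem_product, mem_Ico, id] at hp ⊢
      have := hab _ _ hp.2.1 hp.2.2
      exact ⟨by lia, hp.2⟩
    have h₂ : #(backPairs T W id) ≤ #(backPairs T W fun x => max u a + (r x : ℤ)) := by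
      refine card_backPairs_block_le (le_max_right _ _) (min_le_right _ _) hmin ?_ ?_
      · intro x hx y hy hxy
        exact hr hx hy (by simpa using hxy)
      · intro x hx
        have := hr' x hx
        rw [hW, Int.card_Ico] at this
        rw [mem_Ico]
        lia
    have h₃ : backPairs T W (fun x => max u a + (r x : ℤ)) = backPairs T W r := by
      simp [backPairs]
    calc 36864 * #(backPairs T (Ico u (u + N)) id) ≤ 36864 * #(backPairs T W r) :=
          Nat.mul_le_mul_left _ ((card_le_card h₁).trans (h₃ ▸ h₂))
      _ ≤ #W ^ 2 + M * #W := hrM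
      _ ≤ N ^ 2 + M * N := by gcongr

end Minimal

section Extend

variable {n : ℕ} {T : Fin n → Fin n → Prop}

/-- The extension of a tournament on `Fin n` to `ℤ` in which all other edges point forward. -/
def extend (T : Fin n → Fin n → Prop) (x y : ℤ) : Prop :=
  (∃ i j : Fin n, (i : ℤ) = x ∧ (j : ℤ) = y ∧ T i j) ∨
    ¬ (x ∈ Ico (0 : ℤ) n ∧ y ∈ Ico (0 : ℤ) n) ∧ x < y

lemma exists_fin_coe_eq {x : ℤ} (hx : x ∈ Ico (0 : ℤ) n) : ∃ i : Fin n, (i : ℤ) = x := by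
  rw [mem_Ico] at hx
  exact ⟨⟨x.toNat, by lia⟩, by simp [hx.1]⟩

lemma fin_coe_mem (i : Fin n) : (i : ℤ) ∈ Ico (0 : ℤ) n := by
  have := i.isLt
  rw [mem_Ico]
  lia

lemma fin_coe_injective : Function.Injective fun i : Fin n => (i : ℤ) := fun _ _ h =>
  Fin.ext (Nat.cast_injective h)

lemma extend_coe (i j : Fin n) : extend T i j ↔ T i j := by
  constructor
  · rintro (⟨i', j', hi, hj, h⟩ | ⟨h, -⟩)
    · rwa [fin_coe_injective hi, fin_coe_injective hj] at h
    · exact absurd ⟨fin_coe_mem i, fin_coe_mem j⟩ h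
  · exact fun h => Or.inl ⟨i, j, rfl, rfl, h⟩

lemma extend_of_not {x y : ℤ} (h : ¬ (x ∈ Ico (0 : ℤ) n ∧ y ∈ Ico (0 : ℤ) n)) :
    extend T x y ↔ x < y := by
  refine ⟨?_, fun h' => Or.inr ⟨h, h'⟩⟩
  rintro (⟨i, j, rfl, rfl, -⟩ | ⟨-, h'⟩)
  · exact absurd ⟨fin_coe_mem i, fin_coe_mem j⟩ h
  · exact h'

lemma IsTournament.extend (hT : IsTournament T) : IsTournament (extend T) := by
  constructor
  · rintro x (⟨i, j, rfl, hj, h⟩ | ⟨-, h⟩)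
    · rw [fin_coe_injective hj] at h
      exact hT.1 _ h
    · exact lt_irrefl _ h
  · intro x y hxy
    by_cases h : x ∈ Ico (0 : ℤ) n ∧ y ∈ Ico (0 : ℤ) n
    · obtain ⟨i, rfl⟩ := exists_fin_coe_eq h.1
      obtain ⟨j, rfl⟩ := exists_fin_coe_eq h.2
      rw [extend_coe, extend_coe]
      exact hT.2 i j fun h => hxy (h ▸ rfl)
    · rw [extend_of_not h, extend_of_not (h ∘ And.symm), not_lt]
      exact ⟨le_of_lt, fun h' => lt_of_le_of_ne h' hxy⟩

lemma ContainsU.of_extend (h : ContainsU (extend T) 2) : ContainsU T 2 := by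
  obtain ⟨f, hf, h⟩ := h
  have hmem : ∀ p, f p ∈ Ico (0 : ℤ) n := by
    intro p
    obtain ⟨a, -, ha⟩ := exists_min_image univ f ⟨p, mem_univ p⟩
    obtain ⟨b, -, hb⟩ := exists_max_image univ f ⟨p, mem_univ p⟩
    have ha' : 0 ≤ f a := by
      by_contra! hneg
      have h₁ := h (a.1 - 1, a.2) a (Or.inr (sub_add_cancel _ _).symm)
      rw [extend_of_not (by simp [hneg])] at h₁
      exact absurd h₁ (not_lt.2 (ha _ (mem_univ _)))
    have hb' : f b < n := by
      by_contra! hbig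
      have h₁ := h b (b.1 + 1, b.2) (Or.inr rfl)
      rw [extend_of_not (by simp [hbig])] at h₁
      exact absurd h₁ (not_lt.2 (hb _ (mem_univ _)))
    exact mem_Ico.2 ⟨ha'.trans (ha p (mem_univ p)), (hb p (mem_univ p)).trans_lt hb'⟩
  choose g hg using fun p => exists_fin_coe_eq (hmem p)
  refine ⟨g, fun p q hpq => hf ?_, fun p q hpq => ?_⟩
  · rw [← hg p, ← hg q, hpq]
  · rw [← extend_coe (T := T), hg, hg]
    exact h p q hpq

lemma ContainsU.of_comp {V W : Type*} {T : W → W → Prop} {g : V → W}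
    (hg : Function.Injective g) {t : ℕ} (h : ContainsU (fun x y => T (g x) (g y)) t) :
    ContainsU T t := by
  obtain ⟨f, hf, h⟩ := h
  exact ⟨g ∘ f, hg.comp hf, h⟩

lemma backCount_eq_card_backPairs (ρ : Equiv.Perm (Fin n)) {r : ℤ → ℤ}
    (hr : StrictMono fun i => r (ρ i)) :
    backCount T ρ = #(backPairs (extend T) (Ico (0 : ℤ) n) r) := by
  rw [backCount, ← Set.ncard_coe_finset]
  refine Set.ncard_congr (fun p _ => ((ρ p.1 : ℤ), (ρ p.2 : ℤ))) ?_ ?_ ?_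
  · rintro p ⟨hp, hp'⟩
    simp only [backPairs, coe_filter, mem_product, Set.mem_ofPred_eq]
    exact ⟨⟨fin_coe_mem _, fin_coe_mem _⟩, hr hp, (extend_coe _ _).2 hp'⟩
  · rintro ⟨i, j⟩ ⟨i', j'⟩ _ _ h
    rw [Prod.mk.injEq] at h
    exact Prod.ext (ρ.injective (fin_coe_injective h.1)) (ρ.injective (fin_coe_injective h.2))
  · rintro ⟨x, y⟩ h
    simp only [backPairs, coe_filter, mem_product, Set.mem_ofPred_eq] at h
    obtain ⟨⟨hx, hy⟩, hxy, h⟩ := h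
    obtain ⟨i, rfl⟩ := exists_fin_coe_eq hx
    obtain ⟨j, rfl⟩ := exists_fin_coe_eq hy
    refine ⟨(ρ.symm i, ρ.symm j), ⟨hr.lt_iff_lt.1 ?_, ?_⟩, ?_⟩
    · simpa using hxy
    · simpa [extend_coe] using h
    · simp

end Extend

/-- A `𝒰₂`-free tournament has an ordering with `O(n log² n)` backward edges. -/
theorem exists_backCount_le : ∃ C : ℕ, ∀ (n : ℕ) (T : Fin n → Fin n → Prop), IsTournament T →
    ¬ ContainsU T 2 → ∃ σ : Equiv.Perm (Fin n),
      backCount T σ ≤ C * n * (Nat.log 2 n + 1) ^ 2 := by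
  obtain ⟨M, hM⟩ := IsTournament.exists_ranking 36864
  obtain ⟨m, s₀, hm⟩ := IsMedianOrder.exists_card_heavy_le M
  refine ⟨4 * (s₀ + 16) + 4 * (m + (4 * (s₀ + 16) + 2 * (m + 4))), fun n T hT hfree => ?_⟩
  obtain ⟨σ, hσ⟩ := Finite.exists_min fun σ : Equiv.Perm (Fin n) => backCount T σ
  refine ⟨σ, ?_⟩
  set S : Fin n → Fin n → Prop := fun i j => T (σ i) (σ j) with hS
  have hS' : IsTournament S := ⟨fun i => hT.1 _, fun i j hij => hT.2 _ _ (σ.injective.ne hij)⟩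
  have hSfree : ¬ ContainsU (extend S) 2 := fun h =>
    hfree (ContainsU.of_comp σ.injective h.of_extend)
  have hcount : ∀ ρ : Equiv.Perm (Fin n), backCount T (ρ.trans σ) = backCount S ρ :=
    fun ρ => rfl
  have hid : backCount T σ = #(backPairs (extend S) (Ico (0 : ℤ) n) id) :=
    (hcount 1).trans (backCount_eq_card_backPairs 1 fun i j hij => by simpa using hij)
  have hmed : IsMedianOrder M (extend S) := by
    refine .of_minimal (hM hS'.extend hSfree) hS'.extend hSfree (a := 0) (b := n) ?_ ?_
    · intro x y hxy hyx
      by_contra hcon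
      rw [extend_of_not (by simp only [mem_Ico]; lia)] at hyx
      lia
    · intro r hr
      rw [← hid]
      set ρ := Tuple.sort fun i : Fin n => r i
      have hρ : StrictMono fun i => r (ρ i) :=
        (Tuple.monotone_sort fun i : Fin n => r i).strictMono_of_injective fun i j hij =>
          ρ.injective (fin_coe_injective (hr (fin_coe_mem _) (fin_coe_mem _) hij))
      rw [← backCount_eq_card_backPairs ρ hρ, ← hcount]
      exact hσ _
  set J := Nat.log 2 n + 1
  have hJ : (n : ℤ) < 2 ^ J := by exact_mod_cast Nat.lt_pow_succ_log_self one_lt_two n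
  have h := hmed.card_short_le (hm hmed) (hm hmed.reverseNeg) (Ico (0 : ℤ) n) J le_rfl
  rw [Int.card_Ico, sub_zero, Int.toNat_natCast] at h
  have h₁ : backPairs (extend S) (Ico (0 : ℤ) n) id ⊆ {e ∈ Ico (0 : ℤ) n ×ˢ Ico (0 : ℤ) n |
      extend S e.2 e.1 ∧ e.1 < e.2 ∧ e.2 ≤ e.1 + 2 ^ J} := by
    intro e he
    simp only [backPairs, mem_filter, mem_product, mem_Ico, id] at he ⊢
    exact ⟨he.1, he.2.2, he.2.1, by lia⟩
  rw [hid]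
  refine ((card_le_card h₁).trans h).trans ?_
  have hJ₁ : 1 ≤ J := Nat.le_add_left _ _
  have hJ₂ : J ≤ J ^ 2 := Nat.le_self_pow two_ne_zero J
  generalize 4 * (s₀ + 16) = c
  generalize 2 * (m + 4) = d
  calc n * (c + J * (4 * (m + (c + d * J))))
      = n * (c * 1 + 4 * (m + c) * J + 4 * d * J ^ 2) := by ring
    _ ≤ n * (c * J ^ 2 + 4 * (m + c) * J ^ 2 + 4 * d * J ^ 2) := by
      gcongr
      exact hJ₁.trans hJ₂
    _ = (c + 4 * (m + (c + d))) * n * J ^ 2 := by ring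

lemma natLog_two_add_one_le {n : ℕ} (hn : 2 ≤ n) :
    ((Nat.log 2 n + 1 : ℕ) : ℝ) ≤ 4 * Real.log n := by
  have h₁ : (Nat.log 2 n : ℝ) * Real.log 2 ≤ Real.log n := by
    rw [← Real.log_pow]
    refine Real.log_le_log (by positivity) ?_
    exact_mod_cast Nat.pow_log_le_self 2 (by lia)
  have h₂ : Real.log 2 ≤ Real.log n := Real.log_le_log two_pos (by exact_mod_cast hn)
  have h₃ := Real.log_two_gt_d9
  have h₄ : (0 : ℝ) ≤ Nat.log 2 n := Nat.cast_nonneg _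
  push_cast
  nlinarith

end Tournaments

/-- **Claim (upper bound for `𝒟(2, δ)`).** There is an absolute constant `C > 0` such that
every tournament on `n ≥ 2` vertices in which every ordering of the vertex set has at
least `C·n·(log n)²` backward edges contains a copy of `𝒰₂`. -/
theorem statement18 :
    ∃ C : ℝ, 0 < C ∧
      ∀ (n : ℕ) (T : Fin n → Fin n → Prop), 2 ≤ n → IsTournament T →
        (∀ σ : Equiv.Perm (Fin n),
          C * (n : ℝ) * (Real.log (n : ℝ)) ^ 2 ≤ (backCount T σ : ℝ)) →
        ContainsU T 2 := by
  obtain ⟨C, hC⟩ := exists_backCount_le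
  refine ⟨16 * C + 1, by positivity, fun n T hn hT h => ?_⟩
  by_contra hfree
  obtain ⟨σ, hσ⟩ := hC n T hT hfree
  have hlog : 0 < Real.log n := Real.log_pos (by exact_mod_cast hn)
  have hn' : (0 : ℝ) < n := by positivity
  have h₁ : (backCount T σ : ℝ) ≤ C * n * ((Nat.log 2 n + 1 : ℕ) : ℝ) ^ 2 := by
    exact_mod_cast hσ
  have h₂ : C * n * ((Nat.log 2 n + 1 : ℕ) : ℝ) ^ 2 ≤ C * n * (4 * Real.log n) ^ 2 := by
    gcongr
    exact natLog_two_add_one_le hn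
  have h₃ : 0 < n * Real.log n ^ 2 := by positivity
  linarith [h σ]
end
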